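/- arXiv:2410.14510 — 3 statements merged into one kernel-verified Lean document; each statement's English description precedes it below -/
import Mathlib

section
/- Let L be a finite simple graph with vertex set S, and let W = W(L) be the associated right angled Coxeter group, with generators the elements of S and relations s² = 1 for all s ∈ S and (st)² = 1 for all edges {s,t} of L. Then for every integer n ≥ 1, the number of orbits of the simultaneous conjugation action of W on W_{n,2} equals Σ_{l=0}^{|S|} s(l)·(2ⁿ−1)^l, where s(l) is the number of subsets T ⊆ S of cardinality l that span a complete subgraph of L (with s(0) = 1, counting the empty set). -/
/-- `pTuples G p n` is the set `G_{n,p}` of `n`-tuples of pairwise commuting elements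
of `G`, each of order a power of `p`. -/
def pTuples (G : Type*) [Group G] (p n : ℕ) : Set (Fin n → G) :=
  {v | (∀ i j, Commute (v i) (v j)) ∧ ∀ i, ∃ k : ℕ, orderOf (v i) = p ^ k}

/-- Simultaneous conjugation relation on a set of tuples. -/
def tupleConj {G : Type*} [Group G] {n : ℕ} (s : Set (Fin n → G)) (a b : s) : Prop :=
  ∃ g : G, ∀ i, g * a.1 i * g⁻¹ = b.1 i

/-- The Coxeter matrix of the right angled Coxeter group of a finite simple graph `L`:
diagonal entries `1`, entries `2` on edges, entries `0` (no relation) on non-adjacent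
pairs of distinct vertices. -/
def racMatrix {S : Type*} [DecidableEq S] (L : SimpleGraph S) [DecidableRel L.Adj] :
    CoxeterMatrix S where
  M := Matrix.of fun s t => if s = t then 1 else if L.Adj s t then 2 else 0
  isSymm := by
    ext s t
    simp only [Matrix.transpose_apply, Matrix.of_apply]
    by_cases h : s = t
    · subst h; simp
    · simp only [if_neg h, if_neg (Ne.symm h), SimpleGraph.adj_comm]
  diagonal := fun i => by simp
  off_diagonal := fun i i' h => by
    simp only [Matrix.of_apply, if_neg h]
    split <;> decide

/-- The right angled Coxeter group `W(L)` of a finite simple graph `L`. -/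
def RACoxeterGroup {S : Type*} [DecidableEq S] (L : SimpleGraph S) [DecidableRel L.Adj] :
    Type _ :=
  (racMatrix L).Group

noncomputable instance {S : Type*} [DecidableEq S] (L : SimpleGraph S)
    [DecidableRel L.Adj] : Group (RACoxeterGroup L) :=
  inferInstanceAs (Group (racMatrix L).Group)

/-!
The reflections of a right angled Coxeter group `W` correspond to walls, and a wall with a choice of
side is a root. Every involution can be conjugated by descent on its length until it reverses a
simple root `α_s`. Among the walls of type `s` such an involution reverses only that of `s`, so
everything commuting with it lies in the subgroup generated by `s` and its neighbours, which is
`⟨s⟩ × W_B` with `B` the set of neighbours of `s`. Induction on the vertex set thus conjugates every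
commuting tuple of involutions into the special subgroup of a clique. There an element is determined
by its image in the abelianization `{±1}^S`, and that image is a conjugacy invariant, so the orbits
correspond to the functions `S → {±1}^n` whose support is a clique.
-/

namespace RACoxeterGroup

open CoxeterSystem (inv_simple simple_mul_simple_self simple_mul_simple_cancel_left)

variable {S : Type*} [DecidableEq S] {L : SimpleGraph S} [DecidableRel L.Adj]

section Generators

variable (L) in
/-- `W(L)` as a Coxeter system in the sense of Mathlib. -/
noncomputable def coxeterSystem : CoxeterSystem (racMatrix L) (RACoxeterGroup L) :=
  (racMatrix L).toCoxeterSystem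

variable (L) in
/-- The generator of `W(L)` attached to a vertex. -/
noncomputable abbrev gen (s : S) : RACoxeterGroup L := (coxeterSystem L).simple s

lemma commute_gen_of_adj {s t : S} (h : L.Adj s t) : Commute (gen L s) (gen L t) := by
  have hst : (gen L s * gen L t) ^ 2 = 1 := by
    have := (coxeterSystem L).simple_mul_simple_pow s t
    rwa [show (racMatrix L).M s t = 2 by simp [racMatrix, h, h.ne]] at this
  have := eq_inv_of_mul_eq_one_left ((sq _).symm.trans hst)
  rwa [mul_inv_rev, inv_simple, inv_simple] at this

lemma isLiftable_of_commute {G : Type*} [Monoid G] {f : S → G} (hsq : ∀ s, f s * f s = 1)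
    (hcomm : ∀ s t, L.Adj s t → Commute (f s) (f t)) : (racMatrix L).IsLiftable f := by
  intro s t
  rcases eq_or_ne s t with rfl | hst
  · simp [hsq]
  by_cases hadj : L.Adj s t
  · simp [racMatrix, hst, hadj, (hcomm s t hadj).mul_pow, sq, hsq]
  · simp [racMatrix, hst, hadj]

/-- The universal property of `W(L)`. -/
noncomputable def lift {G : Type*} [Monoid G] (f : S → G) (hsq : ∀ s, f s * f s = 1)
    (hcomm : ∀ s t, L.Adj s t → Commute (f s) (f t)) : RACoxeterGroup L →* G :=
  (coxeterSystem L).lift ⟨f, isLiftable_of_commute hsq hcomm⟩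

lemma lift_gen {G : Type*} [Monoid G] {f : S → G} (hsq : ∀ s, f s * f s = 1)
    (hcomm : ∀ s t, L.Adj s t → Commute (f s) (f t)) (s : S) :
    lift f hsq hcomm (gen L s) = f s :=
  (coxeterSystem L).lift_apply_simple _ s

end Generators

section SpecialSubgroups

variable (L) in
/-- The special subgroup `W_A` generated by the vertices in `A`. -/
noncomputable def special (A : Set S) : Subgroup (RACoxeterGroup L) :=
  Subgroup.closure (gen L '' A)

lemma gen_mem_special {A : Set S} {s : S} (hs : s ∈ A) : gen L s ∈ special L A :=
  Subgroup.subset_closure ⟨s, hs, rfl⟩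

lemma special_le_iff {A : Set S} {H : Subgroup (RACoxeterGroup L)} :
    special L A ≤ H ↔ ∀ s ∈ A, gen L s ∈ H := by
  simp [special, Subgroup.closure_le, Set.subset_def]

lemma special_mono {A B : Set S} (h : A ⊆ B) : special L A ≤ special L B :=
  special_le_iff.2 fun _ hs => gen_mem_special (h hs)

lemma special_univ : special L Set.univ = ⊤ := by
  rw [special, Set.image_univ]
  exact (coxeterSystem L).subgroup_closure_range_simple

@[elab_as_elim]
lemma special_induction {A : Set S} {p : ∀ w ∈ special L A, Prop} (one : p 1 (one_mem _))
    (gen_mul : ∀ s (hs : s ∈ A) w (hw : w ∈ special L A), p w hw →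
      p (gen L s * w) (mul_mem (gen_mem_special hs) hw))
    {w : RACoxeterGroup L} (hw : w ∈ special L A) : p w hw := by
  induction hw using Subgroup.closure_induction_left with
  | one => exact one
  | mul_left x hx y hy ih =>
    obtain ⟨s, hs, rfl⟩ := hx
    exact gen_mul s hs y hy ih
  | inv_mul_cancel x hx y hy ih =>
    obtain ⟨s, hs, rfl⟩ := hx
    simpa only [inv_simple] using gen_mul s hs y hy ih

lemma commute_of_mem_special {A : Set S} {z c : RACoxeterGroup L}
    (hz : ∀ s ∈ A, Commute z (gen L s)) (hc : c ∈ special L A) : Commute z c :=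
  have : special L A ≤ Subgroup.centralizer {z} :=
    special_le_iff.2 fun s hs => Subgroup.mem_centralizer_singleton_iff.2 (hz s hs).eq.symm
  (Subgroup.mem_centralizer_singleton_iff.1 (this hc)).symm

lemma mem_special_or_gen_mul_mem_special {A : Set S} {s : S} (hA : A ⊆ L.neighborSet s)
    {w : RACoxeterGroup L} (hw : w ∈ special L (insert s A)) :
    w ∈ special L A ∨ gen L s * w ∈ special L A := by
  induction hw using special_induction with
  | one => exact .inl (one_mem _)
  | gen_mul t ht y _ ih =>
    rcases ht with rfl | ht
    · rwa [simple_mul_simple_cancel_left, or_comm]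
    · rw [(commute_gen_of_adj (hA ht)).left_comm]
      exact ih.imp (mul_mem (gen_mem_special ht)) (mul_mem (gen_mem_special ht))

variable (L) in
/-- The subgroup generated by `s` and its neighbours; it is the centralizer of `s`. -/
noncomputable def star (s : S) : Subgroup (RACoxeterGroup L) :=
  special L (insert s (L.neighborSet s))

lemma gen_mem_star_self (s : S) : gen L s ∈ star L s :=
  gen_mem_special (Set.mem_insert _ _)

lemma gen_mem_star_of_adj {s t : S} (h : L.Adj s t) : gen L t ∈ star L s :=
  gen_mem_special (Set.mem_insert_of_mem _ h)

lemma commute_gen_of_mem_star {s : S} {w : RACoxeterGroup L} (hw : w ∈ star L s) :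
    Commute (gen L s) w := by
  refine commute_of_mem_special (fun t ht => ?_) hw
  rcases ht with rfl | ht
  · exact Commute.refl _
  · exact commute_gen_of_adj ht

end SpecialSubgroups

section Retractions

open Classical in
variable (L) in
/-- The retraction of `W(L)` onto the special subgroup `W_A`, killing the generators outside
`A`. -/
noncomputable def retraction (A : Set S) : RACoxeterGroup L →* RACoxeterGroup L :=
  lift (fun s => if s ∈ A then gen L s else 1)
    (fun s => by split_ifs <;> simp)
    (fun s t h => by split_ifs <;> simp [commute_gen_of_adj h])

lemma retraction_gen_of_mem {A : Set S} {s : S} (hs : s ∈ A) :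
    retraction L A (gen L s) = gen L s :=
  (lift_gen _ _ s).trans (if_pos hs)

lemma retraction_gen_of_notMem {A : Set S} {s : S} (hs : s ∉ A) :
    retraction L A (gen L s) = 1 :=
  (lift_gen _ _ s).trans (if_neg hs)

lemma retraction_of_mem {A : Set S} {w : RACoxeterGroup L} (hw : w ∈ special L A) :
    retraction L A w = w :=
  have : special L A ≤ (retraction L A).eqLocus (MonoidHom.id _) :=
    special_le_iff.2 fun _ hs => retraction_gen_of_mem hs
  this hw

lemma retraction_mem_special_inter {A B : Set S} {w : RACoxeterGroup L}
    (hw : w ∈ special L B) : retraction L A w ∈ special L (A ∩ B) := by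
  have : special L B ≤ (special L (A ∩ B)).comap (retraction L A) := by
    refine special_le_iff.2 fun s hs => ?_
    by_cases hA : s ∈ A
    · simpa [retraction_gen_of_mem hA] using gen_mem_special (L := L) (show s ∈ A ∩ B from ⟨hA, hs⟩)
    · simp [retraction_gen_of_notMem hA]
  exact this hw

lemma retraction_mem_special (A : Set S) (w : RACoxeterGroup L) :
    retraction L A w ∈ special L A := by
  simpa using retraction_mem_special_inter (A := A) (B := Set.univ) (special_univ (L := L) ▸
    Subgroup.mem_top w)

lemma eq_retraction_or_eq_gen_mul_retraction {A : Set S} {s : S} (hA : A ⊆ L.neighborSet s)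
    {w : RACoxeterGroup L} (hw : w ∈ special L (insert s A)) :
    w = retraction L A w ∨ w = gen L s * retraction L A w := by
  rcases mem_special_or_gen_mul_mem_special hA hw with h | h
  · exact .inl (retraction_of_mem h).symm
  · have hs : s ∉ A := fun hs => L.irrefl (hA hs)
    have := retraction_of_mem h
    rw [map_mul, retraction_gen_of_notMem hs, one_mul] at this
    exact .inr (by rw [this, simple_mul_simple_cancel_left])

end Retractions

section Parity

variable (L) in
/-- The abelianization map of `W(L)`: the coordinate of `parity L w` at `s` is `(-1) ^ k`, where
`k` is the number of occurrences of `s` in any word for `w`. -/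
noncomputable def parity : RACoxeterGroup L →* (S → ℤˣ) :=
  lift (fun s => Pi.mulSingle s (-1))
    (fun _ => funext fun _ => Int.units_mul_self _) (fun _ _ _ => Commute.all _ _)

lemma parity_gen (s : S) : parity L (gen L s) = Pi.mulSingle s (-1) := lift_gen _ _ s

lemma parity_apply_of_notMem {A : Set S} {w : RACoxeterGroup L} (hw : w ∈ special L A) {s : S}
    (hs : s ∉ A) : parity L w s = 1 := by
  have : special L A ≤ ((Pi.evalMonoidHom (fun _ : S => ℤˣ) s).comp (parity L)).ker := by
    refine special_le_iff.2 fun t ht => ?_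
    have hts : s ≠ t := fun h => hs (h ▸ ht)
    simp [MonoidHom.mem_ker, parity_gen, hts]
  exact this hw

lemma parity_conj (g w : RACoxeterGroup L) : parity L (g * w * g⁻¹) = parity L w := by
  rw [map_mul, map_mul, map_inv, mul_inv_cancel_comm]

lemma parity_sq (w : RACoxeterGroup L) : parity L (w ^ 2) = 1 := by
  rw [map_pow]
  exact funext fun _ => Int.units_sq _

lemma parity_retraction_apply {A : Set S} {s : S} (hs : s ∈ A) (w : RACoxeterGroup L) :
    parity L (retraction L A w) s = parity L w s := by
  have : (Pi.evalMonoidHom (fun _ : S => ℤˣ) s).comp ((parity L).comp (retraction L A)) =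
      (Pi.evalMonoidHom (fun _ : S => ℤˣ) s).comp (parity L) := by
    refine (coxeterSystem L).ext_simple fun t => ?_
    change parity L (retraction L A (gen L t)) s = parity L (gen L t) s
    by_cases ht : t ∈ A
    · rw [retraction_gen_of_mem ht]
    · have hst : s ≠ t := fun h => ht (h ▸ hs)
      simp [retraction_gen_of_notMem ht, parity_gen, hst]
  exact DFunLike.congr_fun this w

lemma parity_retraction {A : Set S} {w : RACoxeterGroup L} (hw : ∀ s ∉ A, parity L w s = 1) :
    parity L (retraction L A w) = parity L w := by
  ext1 s
  by_cases hs : s ∈ A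
  · exact parity_retraction_apply hs w
  · rw [hw s hs, parity_apply_of_notMem (retraction_mem_special A w) hs]

lemma exists_mem_special_parity_eq [Finite S] {A : Set S} {f : S → ℤˣ}
    (hf : ∀ s ∉ A, f s = 1) : ∃ w ∈ special L A, parity L w = f := by
  have := Fintype.ofFinite S
  change f ∈ (special L A).map (parity L)
  rw [← Finset.univ_prod_mulSingle f]
  refine Subgroup.prod_mem _ fun s _ => ?_
  rcases Int.units_eq_one_or (f s) with h | h
  · simp [h]
  · have hs : s ∈ A := by
      by_contra hs
      simp [hf s hs] at h
    exact ⟨gen L s, gen_mem_special hs, by rw [parity_gen, h]⟩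

end Parity

section Roots

variable (L) in
/-- The walls of `W(L)`. The coset `g * star L s` stands for the reflection `g * gen L s * g⁻¹`,
whose type is the first component `s`. -/
abbrev Wall := Σ s : S, RACoxeterGroup L ⧸ star L s

variable (L) in
/-- The wall of the reflection `gen L s`. -/
noncomputable def baseWall (s : S) : Wall L := ⟨s, (1 : RACoxeterGroup L)⟩

lemma smul_baseWall_eq_iff {s : S} {w : RACoxeterGroup L} :
    w • baseWall L s = baseWall L s ↔ w ∈ star L s := by
  simp [baseWall, Sigma.smul_mk, QuotientGroup.eq]

lemma smul_eq_baseWall_iff_of_mem_star {s : S} {w : RACoxeterGroup L} (hw : w ∈ star L s)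
    {x : Wall L} : w • x = baseWall L s ↔ x = baseWall L s := by
  nth_rw 1 [← smul_baseWall_eq_iff.2 hw, smul_left_cancel_iff]

open Classical in
/-- The sign by which `gen L s` acts on the sides of a wall. -/
noncomputable def wallSign (s : S) (x : Wall L) : ℤˣ := if x = baseWall L s then -1 else 1

lemma wallSign_baseWall (s : S) : wallSign s (baseWall L s) = -1 := if_pos rfl

lemma wallSign_of_ne {s : S} {x : Wall L} (h : x ≠ baseWall L s) : wallSign s x = 1 := if_neg h

lemma wallSign_smul {s : S} {w : RACoxeterGroup L} (hw : w ∈ star L s) (x : Wall L) :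
    wallSign s (w • x) = wallSign s x := by
  by_cases h : x = baseWall L s
  · rw [h, smul_baseWall_eq_iff.2 hw]
  · rw [wallSign_of_ne h, wallSign_of_ne (mt (smul_eq_baseWall_iff_of_mem_star hw).1 h)]

variable (L) in
/-- A root is a wall together with a choice of one of its two sides. -/
@[ext]
structure Root where
  wall : Wall L
  sign : ℤˣ

namespace Root

instance : Neg (Root L) := ⟨fun α => ⟨α.wall, -α.sign⟩⟩

@[simp] lemma wall_neg (α : Root L) : (-α).wall = α.wall := rfl

@[simp] lemma sign_neg (α : Root L) : (-α).sign = -α.sign := rfl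

variable (L) in
/-- The positive root on the wall of `gen L s`. -/
noncomputable def simple (s : S) : Root L := ⟨baseWall L s, 1⟩

@[simp] lemma wall_simple (s : S) : (simple L s).wall = baseWall L s := rfl

@[simp] lemma sign_simple (s : S) : (simple L s).sign = 1 := rfl

/-- The action of `gen L s` on roots: it moves the walls and exchanges the two sides of its own
wall only. -/
noncomputable def genMap (s : S) (α : Root L) : Root L :=
  ⟨gen L s • α.wall, wallSign s α.wall * α.sign⟩

lemma genMap_involutive (s : S) : Function.Involutive (genMap (L := L) s) := by
  intro α
  ext1
  · simp only [genMap, smul_smul, simple_mul_simple_self, one_smul]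
  · simp only [genMap, wallSign_smul (gen_mem_star_self s), ← mul_assoc, Int.units_mul_self,
      one_mul]

lemma genMap_comm_of_adj {s t : S} (h : L.Adj s t) (α : Root L) :
    genMap s (genMap t α) = genMap t (genMap s α) := by
  ext1
  · simp only [genMap, smul_smul, (commute_gen_of_adj h).eq]
  · simp only [genMap, wallSign_smul (gen_mem_star_of_adj h),
      wallSign_smul (gen_mem_star_of_adj h.symm), mul_left_comm]

/-- The permutation representation of `W(L)` on the roots. -/
noncomputable def toPerm : RACoxeterGroup L →* Equiv.Perm (Root L) :=
  lift (fun s => (genMap_involutive s).toPerm)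
    (fun s => Equiv.ext fun α => genMap_involutive s α)
    (fun _ _ h => Equiv.ext fun α => genMap_comm_of_adj h α)

noncomputable instance : MulAction (RACoxeterGroup L) (Root L) :=
  MulAction.compHom _ toPerm

lemma gen_smul (s : S) (α : Root L) : gen L s • α = genMap s α :=
  congrArg (fun e : Equiv.Perm (Root L) => e α) (lift_gen _ _ s)

@[simp] lemma wall_smul (w : RACoxeterGroup L) (α : Root L) : (w • α).wall = w • α.wall := by
  induction w using (coxeterSystem L).simple_induction_left with
  | one => simp only [one_smul]
  | mul_simple_left w s ih =>
    rw [mul_smul, mul_smul, gen_smul, genMap, ih]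

@[simp] protected lemma smul_neg (w : RACoxeterGroup L) (α : Root L) : w • (-α) = -(w • α) := by
  induction w using (coxeterSystem L).simple_induction_left with
  | one => simp only [one_smul]
  | mul_simple_left w s ih =>
    rw [mul_smul, mul_smul, ih]
    ext1
    · simp
    · simp only [gen_smul, genMap, wall_neg, sign_neg, mul_neg]

lemma gen_smul_simple_self (s : S) : gen L s • simple L s = -simple L s := by
  ext1
  · simpa using smul_baseWall_eq_iff.2 (gen_mem_star_self s)
  · simp [gen_smul, genMap, wallSign_baseWall]

lemma sign_gen_smul_of_ne {s : S} {α : Root L} (h : α.wall ≠ baseWall L s) :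
    (gen L s • α).sign = α.sign := by
  rw [gen_smul, genMap, wallSign_of_ne h, one_mul]

lemma sign_smul_of_mem_special {A : Set S} {w : RACoxeterGroup L} (hw : w ∈ special L A)
    {α : Root L} (hα : α.wall.1 ∉ A) : (w • α).sign = α.sign := by
  induction hw using special_induction with
  | one => rw [one_smul]
  | gen_mul t ht y _ ih =>
    rw [mul_smul, sign_gen_smul_of_ne, ih]
    rintro h
    have htype : α.wall.1 = t := by
      rw [wall_smul] at h
      exact congrArg Sigma.fst h
    exact hα (htype ▸ ht)

end Root

end Roots

section Descents

open Root

lemma isLeftDescent_of_sign_eq_neg_one {s : S} {w : RACoxeterGroup L}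
    (h : (w⁻¹ • simple L s).sign = -1) : (coxeterSystem L).IsLeftDescent w s := by
  induction hn : (coxeterSystem L).length w using Nat.strong_induction_on generalizing w with
  | _ n ih =>
    subst hn
    have hne : w ≠ 1 := by
      rintro rfl
      simp at h
    obtain ⟨t, ht⟩ := (coxeterSystem L).exists_rightDescent_of_ne_one hne
    obtain ⟨v, rfl⟩ : ∃ v, w = v * gen L t :=
      ⟨w * gen L t, by rw [mul_assoc, simple_mul_simple_self, mul_one]⟩
    have hlen : (coxeterSystem L).length v < (coxeterSystem L).length (v * gen L t) := by
      rwa [CoxeterSystem.IsRightDescent, mul_assoc, simple_mul_simple_self, mul_one] at ht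
    rw [mul_inv_rev, inv_simple, mul_smul] at h
    rw [CoxeterSystem.IsLeftDescent]
    -- If it is the last letter `t` that makes the root negative, then `t = s` commutes with `v`,
    -- so `s * w = v`.
    by_cases hwall : (v⁻¹ • simple L s).wall = baseWall L t
    · rw [wall_smul] at hwall
      obtain rfl : s = t := congrArg Sigma.fst hwall
      have hv : v ∈ star L s := inv_mem_iff.1 (smul_baseWall_eq_iff.1 hwall)
      rwa [← (commute_gen_of_mem_star hv).eq, simple_mul_simple_cancel_left,
        (commute_gen_of_mem_star hv).eq]
    · rw [sign_gen_smul_of_ne hwall] at h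
      calc (coxeterSystem L).length (gen L s * (v * gen L t))
          ≤ (coxeterSystem L).length (gen L s * v) + 1 := by
            simpa [mul_assoc] using (coxeterSystem L).length_mul_le (gen L s * v) (gen L t)
        _ ≤ (coxeterSystem L).length v := ih _ hlen h rfl
        _ < (coxeterSystem L).length (v * gen L t) := hlen

lemma isLeftDescent_iff_sign_eq_neg_one {s : S} {w : RACoxeterGroup L} :
    (coxeterSystem L).IsLeftDescent w s ↔ (w⁻¹ • simple L s).sign = -1 := by
  refine ⟨fun h => ?_, isLeftDescent_of_sign_eq_neg_one⟩
  rw [CoxeterSystem.isLeftDescent_iff_not_isLeftDescent_mul] at h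
  refine (Int.units_eq_one_or _).resolve_left fun hpos => h (isLeftDescent_of_sign_eq_neg_one ?_)
  rw [mul_inv_rev, inv_simple, mul_smul, gen_smul_simple_self, Root.smul_neg, Root.sign_neg, hpos]

lemma exists_conj_smul_simple_eq_neg {w : RACoxeterGroup L} (hw : w * w = 1) (hne : w ≠ 1) :
    ∃ (g : RACoxeterGroup L) (s : S), (g * w * g⁻¹) • simple L s = -simple L s := by
  induction hn : (coxeterSystem L).length w using Nat.strong_induction_on generalizing w with
  | _ n ih =>
    subst hn
    obtain ⟨s, hs⟩ := (coxeterSystem L).exists_leftDescent_of_ne_one hne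
    have hinv : w⁻¹ = w := inv_eq_of_mul_eq_one_left hw
    have hsign : (w • simple L s).sign = -1 := by
      rwa [isLeftDescent_iff_sign_eq_neg_one, hinv] at hs
    by_cases hwall : (w • simple L s).wall = baseWall L s
    · refine ⟨1, s, ?_⟩
      rw [one_mul, inv_one, mul_one]
      exact Root.ext hwall hsign
    have hdesc : (coxeterSystem L).IsLeftDescent (w * gen L s) s := by
      rw [isLeftDescent_iff_sign_eq_neg_one, mul_inv_rev, inv_simple, hinv, mul_smul,
        sign_gen_smul_of_ne hwall, hsign]
    have hlen : (coxeterSystem L).length (gen L s * (w * gen L s)) < (coxeterSystem L).length w :=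
      calc (coxeterSystem L).length (gen L s * (w * gen L s))
          < (coxeterSystem L).length (w * gen L s) := hdesc
        _ = (coxeterSystem L).length (gen L s * w) := by
          rw [← CoxeterSystem.length_inv, mul_inv_rev, inv_simple, hinv]
        _ < (coxeterSystem L).length w := hs
    have hsq : gen L s * (w * gen L s) * (gen L s * (w * gen L s)) = 1 := by
      simp only [mul_assoc, simple_mul_simple_cancel_left]
      rw [← mul_assoc w w, hw, one_mul, simple_mul_simple_self]
    have hne' : gen L s * (w * gen L s) ≠ 1 := by
      rwa [Ne, mul_eq_one_iff_eq_inv', inv_simple, mul_eq_right]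
    obtain ⟨g, t, hg⟩ := ih _ hlen hsq hne' rfl
    refine ⟨g * gen L s, t, ?_⟩
    simpa only [mul_inv_rev, inv_simple, mul_assoc] using hg

end Descents

section Involutions

open Root

lemma smul_simple_of_mem_special {s : S} {w : RACoxeterGroup L}
    (hw : w ∈ special L (L.neighborSet s)) : w • simple L s = simple L s := by
  ext1
  · rw [wall_smul]
    exact smul_baseWall_eq_iff.2 (special_mono (Set.subset_insert _ _) hw)
  · exact sign_smul_of_mem_special hw (L.irrefl)

lemma gen_mul_mem_special_of_smul_simple_eq_neg {s : S} {y : RACoxeterGroup L}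
    (hy : y • simple L s = -simple L s) : gen L s * y ∈ special L (L.neighborSet s) := by
  have hstar : y ∈ star L s := by
    rw [← smul_baseWall_eq_iff]
    simpa using congrArg wall hy
  refine (mem_special_or_gen_mul_mem_special subset_rfl hstar).resolve_left fun h => ?_
  rw [smul_simple_of_mem_special h] at hy
  exact absurd (congrArg sign hy) (by simp)

lemma parity_eq_neg_one_of_smul_simple_eq_neg {s : S} {y : RACoxeterGroup L}
    (hy : y • simple L s = -simple L s) : parity L y s = -1 := by
  have h := parity_apply_of_notMem (gen_mul_mem_special_of_smul_simple_eq_neg hy)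
    (L.irrefl : ¬ L.Adj s s)
  rw [map_mul, parity_gen, Pi.mul_apply, Pi.mulSingle_eq_same] at h
  simpa [neg_eq_iff_eq_neg] using h

/-- `y` is the product of `gen L s` and an element of `W` generated by neighbours of `s`, which
changes no sign on walls of type `s`. -/
lemma wall_eq_baseWall_of_smul_eq_neg {s : S} {y : RACoxeterGroup L}
    (hy : y • simple L s = -simple L s) {β : Root L} (hβ : y • β = -β) (htype : β.wall.1 = s) :
    β.wall = baseWall L s := by
  set c := gen L s * y with hc
  have hmem : c ∈ special L (L.neighborSet s) := gen_mul_mem_special_of_smul_simple_eq_neg hy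
  have hcβ : c • β = -(gen L s • β) := by rw [hc, mul_smul, hβ, Root.smul_neg]
  have hcsign : (c • β).sign = β.sign := sign_smul_of_mem_special hmem (htype ▸ L.irrefl)
  by_contra hne
  rw [hcβ, Root.sign_neg, sign_gen_smul_of_ne hne] at hcsign
  exact absurd hcsign (by simp)

lemma mem_star_of_commute {s : S} {y u : RACoxeterGroup L}
    (hy : y • simple L s = -simple L s) (hu : Commute y u) : u ∈ star L s := by
  have hβ : y • u • simple L s = -(u • simple L s) := by
    rw [← mul_smul, hu.eq, mul_smul, hy, Root.smul_neg]
  rw [← smul_baseWall_eq_iff]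
  simpa using wall_eq_baseWall_of_smul_eq_neg hy hβ (by simp; rfl)

lemma parity_ne_one_of_mul_self_eq_one {w : RACoxeterGroup L} (hw : w * w = 1) (hne : w ≠ 1) :
    parity L w ≠ 1 := by
  obtain ⟨g, s, h⟩ := exists_conj_smul_simple_eq_neg hw hne
  intro hpar
  have := parity_eq_neg_one_of_smul_simple_eq_neg h
  rw [parity_conj, hpar] at this
  exact absurd this (by simp)

/-- An element of order `4` would have a nontrivial involution, of trivial parity, as its square. -/
lemma exists_orderOf_eq_two_pow_iff {w : RACoxeterGroup L} :
    (∃ k, orderOf w = 2 ^ k) ↔ w * w = 1 := by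
  rw [← sq]
  refine ⟨?_, fun h => ?_⟩
  · rintro ⟨_ | _ | k, hk⟩
    · rw [pow_zero, orderOf_eq_one_iff] at hk
      rw [hk, one_pow]
    · rw [zero_add, pow_one] at hk
      rw [← hk, pow_orderOf_eq_one]
    · have hsq : w ^ 2 ^ (k + 1) * w ^ 2 ^ (k + 1) = 1 := by
        rw [← sq, ← pow_mul, ← pow_succ, ← hk, pow_orderOf_eq_one]
      have hne : w ^ 2 ^ (k + 1) ≠ 1 :=
        pow_ne_one_of_lt_orderOf (by positivity) (hk ▸ Nat.pow_lt_pow_succ one_lt_two)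
      have hparity : parity L (w ^ 2 ^ (k + 1)) = 1 := by
        rw [pow_succ, pow_mul, parity_sq]
      exact absurd hparity (parity_ne_one_of_mul_self_eq_one hsq hne)
  · obtain ⟨k, -, hk⟩ := (Nat.dvd_prime_pow Nat.prime_two).1
      ((pow_one 2).symm ▸ orderOf_dvd_of_pow_eq_one h)
    exact ⟨k, hk⟩

end Involutions

section Cliques

lemma commute_of_mem_special_of_isClique {T : Set S} (hT : L.IsClique T) {x y : RACoxeterGroup L}
    (hx : x ∈ special L T) (hy : y ∈ special L T) : Commute x y := by
  refine commute_of_mem_special (fun s hs => ?_) hy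
  refine (commute_of_mem_special (fun t ht => ?_) hx).symm
  rcases eq_or_ne s t with rfl | hst
  · exact Commute.refl _
  · exact commute_gen_of_adj (hT hs ht hst)

lemma mul_self_of_mem_special_of_isClique {T : Set S} (hT : L.IsClique T) {w : RACoxeterGroup L}
    (hw : w ∈ special L T) : w * w = 1 := by
  induction hw using special_induction with
  | one => exact one_mul _
  | gen_mul s hs y hy ih =>
    have hcomm := commute_of_mem_special_of_isClique hT (gen_mem_special hs) hy
    rw [hcomm.symm.mul_mul_mul_comm, simple_mul_simple_self, ih, one_mul]

lemma parity_injOn_special_of_isClique {T : Set S} (hT : L.IsClique T) :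
    Set.InjOn (parity L) (special L T) := by
  intro x hx y hy hxy
  by_contra hne
  have hmem : x * y⁻¹ ∈ special L T := mul_mem hx (inv_mem hy)
  refine parity_ne_one_of_mul_self_eq_one (mul_self_of_mem_special_of_isClique hT hmem)
    (mt mul_inv_eq_one.1 hne) ?_
  rw [map_mul, map_inv, hxy, mul_inv_cancel]

/-- The retraction onto `W_{T'}` carries `x` to `W_T ∩ W_{T'}` without changing its parity. -/
lemma eq_of_parity_eq {T T' : Set S} (hT : L.IsClique T) (hT' : L.IsClique T')
    {x y : RACoxeterGroup L} (hx : x ∈ special L T) (hy : y ∈ special L T')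
    (hxy : parity L x = parity L y) : x = y := by
  have hret : parity L (retraction L T' x) = parity L x :=
    parity_retraction fun s hs => hxy ▸ parity_apply_of_notMem hy hs
  have hmem : retraction L T' x ∈ special L T :=
    special_mono Set.inter_subset_right (retraction_mem_special_inter hx)
  have hx' : retraction L T' x = x := parity_injOn_special_of_isClique hT hmem hx hret
  exact parity_injOn_special_of_isClique hT' (hx' ▸ retraction_mem_special T' x) hy hxy

end Cliques

section Conjugation

variable {ι : Type*} {v : ι → RACoxeterGroup L}

lemma exists_conj_mem_special_insert {A : Set S} (hmem : ∀ i, v i ∈ special L A)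
    (hsq : ∀ i, v i * v i = 1) (hcomm : ∀ i j, Commute (v i) (v j)) {i : ι} (hi : v i ≠ 1) :
    ∃ k ∈ special L A, ∃ s ∈ A, ∀ j,
      k * v j * k⁻¹ ∈ special L (insert s (A ∩ L.neighborSet s)) := by
  obtain ⟨g, s, hg⟩ := exists_conj_smul_simple_eq_neg (hsq i) hi
  have hs : s ∈ A := by
    by_contra hs
    have hneg := parity_eq_neg_one_of_smul_simple_eq_neg hg
    rw [parity_conj, parity_apply_of_notMem (hmem i) hs] at hneg
    exact absurd hneg (by decide)
  refine ⟨retraction L A g, retraction_mem_special A g, s, hs, fun j => ?_⟩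
  have hstar : g * v j * g⁻¹ ∈ star L s :=
    mem_star_of_commute hg (Commute.conj_iff g |>.2 (hcomm i j))
  have hret := retraction_mem_special_inter (A := A) hstar
  rwa [map_mul, map_mul, map_inv, retraction_of_mem (hmem j), Set.inter_insert_of_mem hs] at hret

lemma mul_mul_inv_mem_special_insert {A T : Set S} {s : S} {g x : RACoxeterGroup L}
    (hA : A ⊆ L.neighborSet s) (hg : g ∈ special L A) (hx : x ∈ special L (insert s A))
    (hT : g * retraction L A x * g⁻¹ ∈ special L T) : g * x * g⁻¹ ∈ special L (insert s T) := by
  have hT' : g * retraction L A x * g⁻¹ ∈ special L (insert s T) :=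
    special_mono (Set.subset_insert s T) hT
  rcases eq_retraction_or_eq_gen_mul_retraction hA hx with h | h
  · rwa [h]
  · have hcomm : Commute (gen L s) g :=
      commute_of_mem_special (fun t ht => commute_gen_of_adj (hA ht)) hg
    rw [h, ← mul_assoc, ← hcomm.eq, mul_assoc (gen L s), mul_assoc (gen L s)]
    exact mul_mem (gen_mem_special (Set.mem_insert s T)) hT'

theorem exists_conj_mem_special_isClique (A : Finset S) (hmem : ∀ i, v i ∈ special L (A : Set S))
    (hsq : ∀ i, v i * v i = 1) (hcomm : ∀ i j, Commute (v i) (v j)) :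
    ∃ g ∈ special L (A : Set S), ∃ T ⊆ (A : Set S), L.IsClique T ∧
      ∀ i, g * v i * g⁻¹ ∈ special L T := by
  induction A using Finset.strongInduction generalizing v with
  | H A ih =>
    by_cases hone : ∀ i, v i = 1
    · exact ⟨1, one_mem _, ∅, Set.empty_subset _, SimpleGraph.isClique_empty, by simp [hone]⟩
    obtain ⟨i, hi⟩ := not_forall.1 hone
    obtain ⟨k, hk, s, hs, hks⟩ := exists_conj_mem_special_insert hmem hsq hcomm hi
    set B := A.filter (L.Adj s)
    have hB : (B : Set S) = (A : Set S) ∩ L.neighborSet s := Finset.coe_filter _ _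
    rw [← hB] at hks
    have hBA : B ⊂ A := Finset.filter_ssubset.2 ⟨s, hs, L.irrefl⟩
    obtain ⟨g, hg, T, hTB, hT, hgT⟩ := ih B hBA
      (v := fun j => retraction L B (k * v j * k⁻¹)) (fun j => retraction_mem_special _ _)
      (fun j => by rw [← map_mul, conj_mul, hsq, mul_one, mul_inv_cancel, map_one])
      (fun j l => (((hcomm j l).map (MulAut.conj k)).map (retraction L B)))
    have hBs : (B : Set S) ⊆ L.neighborSet s := hB ▸ Set.inter_subset_right
    refine ⟨g * k, mul_mem (special_mono (Finset.coe_subset.2 hBA.subset) hg) hk, insert s T,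
      Set.insert_subset hs (hTB.trans (Finset.coe_subset.2 hBA.subset)),
      hT.insert fun t ht _ => hBs (hTB ht), fun j => ?_⟩
    simpa only [mul_inv_rev, mul_assoc] using
      mul_mul_inv_mem_special_insert hBs hg (hks j) (hgT j)

end Conjugation

section Classification

variable (L) in
/-- The parities of the entries of a tuple, as a function on the orbits of simultaneous
conjugation. -/
noncomputable def orbitParity (n : ℕ) :
    Quot (tupleConj (pTuples (RACoxeterGroup L) 2 n)) → S → Fin n → ℤˣ :=
  Quot.lift (fun v s i => parity L (v.1 i) s) fun v w ⟨g, hg⟩ => by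
    ext s i
    rw [← hg i, parity_conj]

variable {n : ℕ}

lemma exists_conj_mem_special_of_mem_pTuples [Finite S] {v : Fin n → RACoxeterGroup L}
    (hv : v ∈ pTuples (RACoxeterGroup L) 2 n) :
    ∃ (g : RACoxeterGroup L) (T : Set S), L.IsClique T ∧ ∀ i, g * v i * g⁻¹ ∈ special L T := by
  have := Fintype.ofFinite S
  obtain ⟨g, -, T, -, hT, hg⟩ := exists_conj_mem_special_isClique (L := L) Finset.univ (v := v)
    (fun i => by rw [Finset.coe_univ, special_univ]; exact Subgroup.mem_top _)
    (fun i => exists_orderOf_eq_two_pow_iff.1 (hv.2 i)) hv.1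
  exact ⟨g, T, hT, hg⟩

lemma orbitParity_injective [Finite S] : Function.Injective (orbitParity L n) := by
  rintro ⟨v, hv⟩ ⟨w, hw⟩ h
  obtain ⟨g, T, hT, hg⟩ := exists_conj_mem_special_of_mem_pTuples hv
  obtain ⟨k, T', hT', hk⟩ := exists_conj_mem_special_of_mem_pTuples hw
  refine Quot.sound ⟨k⁻¹ * g, fun i => ?_⟩
  have hparity : parity L (v i) = parity L (w i) := funext fun s => congrFun (congrFun h s) i
  have heq : g * v i * g⁻¹ = k * w i * k⁻¹ :=
    eq_of_parity_eq hT hT' (hg i) (hk i) (by rw [parity_conj, parity_conj, hparity])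
  calc k⁻¹ * g * v i * (k⁻¹ * g)⁻¹ = k⁻¹ * (g * v i * g⁻¹) * k := by group
    _ = w i := by rw [heq]; group

lemma range_orbitParity [Finite S] :
    Set.range (orbitParity L n) = {f | L.IsClique (Function.mulSupport f)} := by
  refine Set.Subset.antisymm ?_ fun f hf => ?_
  · rintro _ ⟨⟨v, hv⟩, rfl⟩
    obtain ⟨g, T, hT, hg⟩ := exists_conj_mem_special_of_mem_pTuples hv
    refine hT.subset (Function.mulSupport_subset_iff'.2 fun s hs => funext fun i => ?_)
    change parity L (v i) s = 1
    rw [← parity_conj g, parity_apply_of_notMem (hg i) hs]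
  · have hsupp (i : Fin n) (s : S) (hs : s ∉ Function.mulSupport f) : f s i = 1 :=
      congrFun (Function.notMem_mulSupport.1 hs) i
    choose v hv hparity using fun i => exists_mem_special_parity_eq (L := L) (hsupp i)
    have hvmem : v ∈ pTuples (RACoxeterGroup L) 2 n :=
      ⟨fun i j => commute_of_mem_special_of_isClique hf (hv i) (hv j),
        fun i => exists_orderOf_eq_two_pow_iff.2 (mul_self_of_mem_special_of_isClique hf (hv i))⟩
    exact ⟨Quot.mk _ ⟨v, hvmem⟩, funext fun s => funext fun i => congrFun (hparity i) s⟩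

theorem card_quot_tupleConj_pTuples [Finite S] :
    Nat.card (Quot (tupleConj (pTuples (RACoxeterGroup L) 2 n))) =
      Nat.card {f : S → Fin n → ℤˣ // L.IsClique (Function.mulSupport f)} := by
  rw [← Nat.card_range_of_injective orbitParity_injective, range_orbitParity]
  rfl

end Classification

end RACoxeterGroup

section Counting

variable {α M : Type*} [Fintype α] [One M]

open Finset Function Classical in
lemma card_mulSupport_eq [Fintype M] (T : Finset α) :
    #{f : α → M | mulSupport f = T} = (Fintype.card M - 1) ^ #T := by
  have : ({f : α → M | mulSupport f = T} : Finset (α → M)) =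
      Fintype.piFinset fun a => if a ∈ T then univ.erase 1 else {1} := by
    ext f
    simp only [mem_filter, mem_univ, true_and, Fintype.mem_piFinset, Set.ext_iff, mem_mulSupport,
      mem_coe]
    refine forall_congr' fun a => ?_
    by_cases ha : a ∈ T <;> simp [ha]
  rw [this, Fintype.card_piFinset]
  simp only [apply_ite card, card_erase_of_mem (mem_univ _), card_univ, card_singleton]
  rw [prod_ite_mem, univ_inter, prod_const]

open Finset Function in
lemma card_subtype_mulSupport [Finite M] (p : Set α → Prop)
    [DecidablePred fun T : Finset α => p T] :
    Nat.card {f : α → M // p (mulSupport f)} =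
      ∑ T with p (T : Finset α), (Nat.card M - 1) ^ #T := by
  classical
  have := Fintype.ofFinite M
  have hmaps : ∀ f ∈ ({f | p (mulSupport f)} : Finset (α → M)),
      (mulSupport f).toFinset ∈ ({T | p T} : Finset (Finset α)) := by
    simp
  rw [Nat.card_eq_fintype_card, Fintype.card_subtype, card_eq_sum_card_fiberwise hmaps]
  refine sum_congr rfl fun T hT => ?_
  rw [Nat.card_eq_fintype_card, ← card_mulSupport_eq T, filter_filter]
  congr 1
  ext f
  have hp : p T := (mem_filter.1 hT).2
  simp only [mem_filter, mem_univ, true_and, ← coe_inj, Set.coe_toFinset]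
  exact and_iff_right_of_imp fun h => h ▸ hp

open Finset in
lemma sum_filter_pow_card (p : Finset α → Prop) [DecidablePred p] (x : ℕ) :
    ∑ T with p T, x ^ #T =
      ∑ l ∈ range (Fintype.card α + 1), #{T ∈ univ.powerset | #T = l ∧ p T} * x ^ l := by
  rw [← sum_fiberwise_of_maps_to (g := card) (t := range (Fintype.card α + 1))
    fun T _ => mem_range_succ_iff.2 (card_le_univ T)]
  refine sum_congr rfl fun l _ => ?_
  rw [sum_congr rfl fun T hT => by rw [(mem_filter.1 hT).2], sum_const, smul_eq_mul,
    filter_filter, powerset_univ]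
  simp only [and_comm]

end Counting

/-- For a right angled Coxeter group `W = W(L)` on a finite graph with vertex set `S`, the
number of orbits of `W` acting by simultaneous conjugation on `W_{n,2}` equals
`Σ_{l=0}^{|S|} s(l)·(2ⁿ−1)^l`, where `s(l)` is the number of `l`-element subsets of `S`
spanning a complete subgraph of `L`. -/
theorem rac_orbit_count {S : Type*} [Fintype S] [DecidableEq S]
    (L : SimpleGraph S) [DecidableRel L.Adj] (n : ℕ) (hn : 1 ≤ n) :
    Nat.card (Quot (tupleConj (pTuples (RACoxeterGroup L) 2 n))) =
      ∑ l ∈ Finset.range (Fintype.card S + 1),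
        (Finset.univ.powerset.filter
          (fun T : Finset S => T.card = l ∧ ∀ a ∈ T, ∀ b ∈ T, a ≠ b → L.Adj a b)).card *
        (2 ^ n - 1) ^ l := by
  classical
  have hcard : Nat.card (Fin n → ℤˣ) = 2 ^ n := by simp
  have hclique (T : Finset S) :
      L.IsClique (T : Set S) ↔ ∀ a ∈ T, ∀ b ∈ T, a ≠ b → L.Adj a b := Iff.rfl
  rw [RACoxeterGroup.card_quot_tupleConj_pTuples, card_subtype_mulSupport, hcard,
    sum_filter_pow_card]
  simp only [hclique]
end

section
/- Let n ≥ 1. The number of orbits of the simultaneous conjugation action of SL_3(ℤ) on the set SL_3(ℤ)_{n,3} of n-tuples of pairwise commuting elements of 3-power order equals 3ⁿ. -/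
/-! Some entry of a nontrivial tuple has a power `T` of order `3`. It fixes a primitive vector of
`ℤ³` and acts on the quotient `ℤ²` as `ω` does on `ℤ[ω]`, because `ℤ[ω]` has class number one; the
extensions of `ℤ[ω]` by the trivial lattice are classified by `ℤ[ω]/(1 - ω) = 𝔽₃`, so up to sign
there are two of them and hence two conjugacy classes of such `T`. Each is stable under inversion,
and every element of `3`-power order commuting with `T` is a power of `T`, because the units of
`ℤ[ω]` are `±ωʲ`. The nontrivial orbits thus correspond to two copies of the projective space
`ℙ(𝔽₃ⁿ)`, which gives `1 + 2 · (3ⁿ - 1) / 2 = 3ⁿ` orbits. -/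

open Matrix
open scoped LinearAlgebra.Projectivization MatrixGroups

section PTuples

variable {G : Type*} [Group G] {p n : ℕ} {x y : G}

theorem tupleConj_equivalence (s : Set (Fin n → G)) : Equivalence (tupleConj s) where
  refl _ := ⟨1, fun _ => by simp⟩
  symm := fun ⟨g, h⟩ => ⟨g⁻¹, fun i => by rw [← h i]; group⟩
  trans := fun ⟨g, h⟩ ⟨g', h'⟩ => ⟨g' * g, fun i => by rw [← h' i, ← h i]; group⟩

theorem one_mem_pTuples : 1 ∈ pTuples G p n :=
  ⟨fun _ _ => Commute.one_left _, fun _ => ⟨0, by simp⟩⟩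

theorem tupleConj_one_iff {s : Set (Fin n → G)} (h1 : 1 ∈ s) {t : s} :
    tupleConj s t ⟨1, h1⟩ ↔ t.1 = 1 := by
  simp [tupleConj, funext_iff]

theorem pow_val_natCast (hx : orderOf x = p) (m : ℕ) : x ^ (m : ZMod p).val = x ^ m := by
  rw [ZMod.val_natCast, ← hx, pow_mod_orderOf]

theorem pow_val_mul [NeZero p] (hx : orderOf x = p) (a b : ZMod p) :
    x ^ (a * b).val = (x ^ a.val) ^ b.val := by
  rw [← pow_mul, ← pow_val_natCast hx (a.val * b.val), Nat.cast_mul, ZMod.natCast_zmod_val,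
    ZMod.natCast_zmod_val]

theorem pow_val_inj [NeZero p] (hx : orderOf x = p) {a b : ZMod p} :
    x ^ a.val = x ^ b.val ↔ a = b := by
  refine ⟨fun h => ZMod.val_injective p (pow_injOn_Iio_orderOf ?_ ?_ h), fun h => h ▸ rfl⟩ <;>
    simpa [hx] using ZMod.val_lt _

theorem exists_eq_pow_val_of_mem_zpowers [NeZero p] (hx : orderOf x = p)
    (hy : y ∈ Subgroup.zpowers x) : ∃ a : ZMod p, y = x ^ a.val := by
  have hfin : IsOfFinOrder x := orderOf_pos_iff.mp (hx ▸ NeZero.pos p)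
  obtain ⟨m, rfl⟩ := hfin.mem_powers_iff_mem_zpowers.mpr hy
  exact ⟨m, (pow_val_natCast hx m).symm⟩

variable [hp : Fact p.Prime]

theorem pow_val_mem_pTuples (hx : orderOf x = p) (v : Fin n → ZMod p) :
    (fun i => x ^ (v i).val) ∈ pTuples G p n := by
  refine ⟨fun _ _ => Commute.pow_pow_self x _ _, fun i => ?_⟩
  have hdvd : orderOf (x ^ (v i).val) ∣ p ^ 1 :=
    (orderOf_pow_dvd _).trans (by rw [hx, pow_one])
  obtain ⟨k, -, hk⟩ := (Nat.dvd_prime_pow hp.out).mp hdvd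
  exact ⟨k, hk⟩

/-- The tuple of powers of an element `x` of prime order `p` whose exponents are the coordinates
of `v`. -/
def powTuple (hx : orderOf x = p) (v : Fin n → ZMod p) : pTuples G p n :=
  ⟨fun i => x ^ (v i).val, pow_val_mem_pTuples hx v⟩

theorem powTuple_eq_one_iff (hx : orderOf x = p) {v : Fin n → ZMod p} :
    (powTuple hx v).1 = 1 ↔ v = 0 := by
  simp_rw [funext_iff, powTuple, Pi.zero_apply, ← pow_val_inj hx, Pi.one_apply, ZMod.val_zero,
    pow_zero]

theorem tupleConj_powTuple_smul (hx : orderOf x = p) {a : ZMod p} (h : IsConj x (x ^ a.val))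
    (v : Fin n → ZMod p) : tupleConj _ (powTuple hx v) (powTuple hx (a • v)) := by
  obtain ⟨g, hg⟩ := isConj_iff.mp h
  refine ⟨g, fun i => ?_⟩
  simp only [powTuple, Pi.smul_apply, smul_eq_mul]
  rw [pow_val_mul hx, ← hg, conj_pow]

theorem exists_isConj_pow_of_tupleConj_powTuple (hx : orderOf x = p) (hy : orderOf y = p)
    {v w : Fin n → ZMod p} (hv : v ≠ 0) (h : tupleConj _ (powTuple hx v) (powTuple hy w)) :
    ∃ a : ZMod p, IsConj x (y ^ a.val) ∧ w = a • v := by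
  obtain ⟨g, hg⟩ := h
  simp only [powTuple] at hg
  obtain ⟨i, hi⟩ := Function.ne_iff.mp hv
  rw [Pi.zero_apply] at hi
  have hgx : g * x * g⁻¹ = y ^ (w i * (v i)⁻¹).val := by
    rw [pow_val_mul hy, ← hg i, conj_pow, ← pow_val_mul hx, mul_inv_cancel₀ hi, ZMod.val_one,
      pow_one]
  refine ⟨w i * (v i)⁻¹, isConj_iff.mpr ⟨g, hgx⟩, funext fun j => ?_⟩
  rw [Pi.smul_apply, smul_eq_mul, ← pow_val_inj hy, ← hg j, pow_val_mul hy, ← hgx, conj_pow]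

/-- A transversal `x` of the conjugacy classes of elements of order `p` in `G` such that each
`x i` is rational (conjugate to its nontrivial powers) and no element of `p`-power order outside
`⟨x i⟩` commutes with `x i`. -/
structure IsSelfCentralizingTransversal (p : ℕ) {ι : Type*} (x : ι → G) : Prop where
  orderOf_eq : ∀ i, orderOf (x i) = p
  exists_isConj : ∀ g, orderOf g = p → ∃ i, IsConj g (x i)
  eq_of_isConj : ∀ i j, IsConj (x i) (x j) → i = j
  isConj_pow : ∀ i k, k.Coprime p → IsConj (x i) (x i ^ k)
  mem_zpowers : ∀ i g k, orderOf g = p ^ k → Commute g (x i) → g ∈ Subgroup.zpowers (x i)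

namespace IsSelfCentralizingTransversal

variable {ι : Type*} {x : ι → G}

theorem isConj_pow_val (hx : IsSelfCentralizingTransversal p x) (i : ι) {a : ZMod p}
    (ha : a ≠ 0) : IsConj (x i) (x i ^ a.val) :=
  hx.isConj_pow i _ (ZMod.val_coe_unit_coprime (Units.mk0 a ha))

/-- The chosen representatives of the orbits: the trivial tuple, and for each `i` one tuple of
powers of `x i` for every line of exponent vectors. -/
noncomputable def orbitRep (hx : IsSelfCentralizingTransversal p x) :
    Option (ι × ℙ (ZMod p) (Fin n → ZMod p)) → pTuples G p n
  | none => ⟨1, one_mem_pTuples⟩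
  | some (i, ℓ) => powTuple (hx.orderOf_eq i) ℓ.rep

theorem eq_of_tupleConj_orbitRep (hx : IsSelfCentralizingTransversal p x)
    {o o' : Option (ι × ℙ (ZMod p) (Fin n → ZMod p))}
    (h : tupleConj _ (hx.orbitRep o) (hx.orbitRep o')) : o = o' := by
  have not_tupleConj_one (i : ι) (ℓ : ℙ (ZMod p) (Fin n → ZMod p)) :
      ¬ tupleConj _ (hx.orbitRep (some (i, ℓ))) (hx.orbitRep none) := fun h =>
    ℓ.rep_nonzero ((powTuple_eq_one_iff (hx.orderOf_eq i)).mp ((tupleConj_one_iff _).mp h))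
  match o, o' with
  | none, none => rfl
  | some (i, ℓ), none => exact (not_tupleConj_one i ℓ h).elim
  | none, some (i, ℓ) => exact (not_tupleConj_one i ℓ ((tupleConj_equivalence _).symm h)).elim
  | some (i, ℓ), some (j, ℓ') =>
    obtain ⟨a, hconj, ha⟩ := exists_isConj_pow_of_tupleConj_powTuple
      (hx.orderOf_eq i) (hx.orderOf_eq j) ℓ.rep_nonzero h
    have ha0 : a ≠ 0 := by
      rintro rfl
      exact ℓ'.rep_nonzero (by rw [ha, zero_smul])
    have hij : i = j := hx.eq_of_isConj i j (hconj.trans (hx.isConj_pow_val j ha0).symm)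
    have hℓ : ℓ = ℓ' := by
      rw [← ℓ.mk_rep, ← ℓ'.mk_rep, Projectivization.mk_eq_mk_iff']
      exact ⟨a⁻¹, by rw [ha, inv_smul_smul₀ ha0]⟩
    rw [hij, hℓ]

theorem exists_tupleConj_powTuple (hx : IsSelfCentralizingTransversal p x) {t : pTuples G p n}
    (ht : t.1 ≠ 1) : ∃ i v, tupleConj _ t (powTuple (hx.orderOf_eq i) v) := by
  obtain ⟨t, hcomm, hord⟩ := t
  obtain ⟨c, hc⟩ := Function.ne_iff.mp ht
  obtain ⟨k, hk⟩ := hord c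
  have hdvd : p ∣ orderOf (t c) := by
    rw [hk]
    refine dvd_pow_self p fun hk0 => hc ?_
    rwa [hk0, pow_zero, orderOf_eq_one_iff] at hk
  have hne : orderOf (t c) ≠ 0 := hk ▸ pow_ne_zero k hp.out.ne_zero
  obtain ⟨i, hi⟩ := hx.exists_isConj _ (orderOf_pow_orderOf_div hne hdvd)
  obtain ⟨g, hg⟩ := isConj_iff.mp hi
  have hpow (j : Fin n) : ∃ a : ZMod p, g * t j * g⁻¹ = x i ^ a.val := by
    obtain ⟨m, hm⟩ := hord j
    refine exists_eq_pow_val_of_mem_zpowers (hx.orderOf_eq i) (hx.mem_zpowers i _ m ?_ ?_)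
    · rw [← hm]
      exact orderOf_injective (MulAut.conj g).toMonoidHom (MulAut.conj g).injective (t j)
    · rw [← hg]
      exact ((hcomm j c).pow_right _).map (MulAut.conj g)
  choose v hv using hpow
  exact ⟨i, v, g, hv⟩

theorem exists_tupleConj_orbitRep (hx : IsSelfCentralizingTransversal p x) (t : pTuples G p n) :
    ∃ o, tupleConj _ t (hx.orbitRep o) := by
  by_cases ht : t.1 = 1
  · exact ⟨none, (tupleConj_one_iff _).mpr ht⟩
  obtain ⟨i, v, htv⟩ := hx.exists_tupleConj_powTuple ht
  have hv : v ≠ 0 := by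
    rintro rfl
    have h1 : (powTuple (hx.orderOf_eq i) (0 : Fin n → ZMod p)) = ⟨1, one_mem_pTuples⟩ :=
      Subtype.ext ((powTuple_eq_one_iff _).mpr rfl)
    exact ht ((tupleConj_one_iff _).mp (h1 ▸ htv))
  obtain ⟨a, ha⟩ := Projectivization.exists_smul_eq_mk_rep (ZMod p) v hv
  refine ⟨some (i, .mk _ v hv), (tupleConj_equivalence _).trans htv ?_⟩
  rw [orbitRep, ← ha]
  exact tupleConj_powTuple_smul _ (hx.isConj_pow_val i a.ne_zero) v

theorem card_quot_tupleConj [Finite ι] (hx : IsSelfCentralizingTransversal p x) (n : ℕ) :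
    Nat.card (Quot (tupleConj (pTuples G p n))) =
      Nat.card ι * Nat.card (ℙ (ZMod p) (Fin n → ZMod p)) + 1 := by
  have hbij : Function.Bijective fun o => Quot.mk (tupleConj (pTuples G p n)) (hx.orbitRep o) := by
    refine ⟨fun o o' h => ?_, fun q => ?_⟩
    · exact hx.eq_of_tupleConj_orbitRep
        ((tupleConj_equivalence _).eqvGen_iff.mp (Quot.eqvGen_exact h))
    · induction q using Quot.ind with | mk t
      obtain ⟨o, ho⟩ := hx.exists_tupleConj_orbitRep t
      exact ⟨o, (Quot.sound ho).symm⟩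
  rw [← Nat.card_eq_of_bijective _ hbij, Finite.card_option, Nat.card_prod]

end IsSelfCentralizingTransversal

end PTuples

section CubeRoots

variable {ι R : Type*} [Fintype ι] [DecidableEq ι] [CommRing R]

theorem sq_add_self_add_one_eq_zero_of_det_ne_zero [IsDomain R] {X : Matrix ι ι R} (h3 : X ^ 3 = 1)
    (hdet : (X - 1).det ≠ 0) : X ^ 2 + X + 1 = 0 := by
  have hmul : (X - 1) * (X ^ 2 + X + 1) = 0 := by
    rw [← sub_eq_zero.mpr h3]
    noncomm_ring
  exact (isRegular_of_isLeftRegular_det (IsLeftCancelMulZero.mul_left_cancel_of_ne_zero hdet)).left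
    (hmul.trans (mul_zero _).symm)

theorem det_sub_one_eq_zero_of_pow_three_eq_one [LinearOrder R] [IsStrictOrderedRing R]
    (hι : Odd (Fintype.card ι)) {X : Matrix ι ι R} (h3 : X ^ 3 = 1) : (X - 1).det = 0 := by
  by_contra hdet
  have hquad := sq_add_self_add_one_eq_zero_of_det_ne_zero h3 hdet
  -- In odd dimension, `-3` times the identity has negative determinant and so is not a square.
  have hsq : (2 * X + 1) ^ 2 = (-3 : R) • 1 := by
    have hcomplete : (2 * X + 1) ^ 2 = (4 : ℤ) • (X ^ 2 + X + 1) + (-3 : ℤ) • 1 := by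
      noncomm_ring
    rw [hcomplete, hquad, smul_zero, zero_add, ← Int.cast_smul_eq_zsmul R]
    norm_num
  have hneg : (2 * X + 1).det ^ 2 < 0 := by
    rw [← det_pow, hsq, det_smul, det_one, mul_one]
    exact hι.pow_neg (by norm_num)
  exact hneg.not_ge (sq_nonneg _)

theorem isConj_toMatrix_toMatrix {M : Type*} [AddCommGroup M] [Module R M]
    (b c : Module.Basis ι R M) (f : M →ₗ[R] M) :
    IsConj (LinearMap.toMatrix b b f) (LinearMap.toMatrix c c f) := by
  refine ⟨⟨c.toMatrix b, b.toMatrix c, c.toMatrix_mul_toMatrix_flip b,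
    b.toMatrix_mul_toMatrix_flip c⟩, ?_⟩
  simp [SemiconjBy, linearMap_toMatrix_mul_basis_toMatrix, basis_toMatrix_mul_linearMap_toMatrix]

theorem exists_basis_apply_eq_self [IsDomain R] [IsPrincipalIdealRing R] {X : Matrix ι ι R}
    (hdet : (X - 1).det = 0) : ∃ (b : Module.Basis ι R (ι → R)) (i : ι), X *ᵥ b i = b i := by
  obtain ⟨v, hv, hXv⟩ := exists_mulVec_eq_zero_iff.mpr hdet
  let N := LinearMap.ker (toLin' (X - 1))
  obtain ⟨m, snf⟩ := N.smithNormalForm (Pi.basisFun R ι)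
  have hN : Nontrivial N := ⟨⟨v, hXv⟩, 0, by simpa [Subtype.ext_iff] using hv⟩
  obtain ⟨i⟩ := snf.bN.index_nonempty
  have hker : snf.a i • ((X - 1) *ᵥ snf.bM (snf.f i)) = 0 := by
    rw [← mulVec_smul, ← snf.snf]
    exact (snf.bN i).2
  have hne : snf.a i ≠ 0 := fun h =>
    snf.bN.ne_zero i (Subtype.ext (by rw [snf.snf, h, zero_smul]; rfl))
  refine ⟨snf.bM, snf.f i, ?_⟩
  rw [← sub_eq_zero, ← one_mulVec (snf.bM (snf.f i)), mulVec_mulVec, mul_one, ← sub_mulVec]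
  exact (smul_eq_zero.mp hker).resolve_left hne

end CubeRoots

section Affine

variable {R : Type*} [CommRing R] {n : ℕ}

/-- The block upper triangular matrix with diagonal blocks `1` and `Y` and upper right block the
row `a`. It maps the row vector `(1, v)` to `(1, a + v Y)`. -/
def affineMatrix (a : Fin n → R) (Y : Matrix (Fin n) (Fin n) R) :
    Matrix (Fin (n + 1)) (Fin (n + 1)) R :=
  of (vecCons (vecCons 1 a) fun i => vecCons 0 (Y i))

theorem affineMatrix_inj {a b : Fin n → R} {Y Z : Matrix (Fin n) (Fin n) R} :
    affineMatrix a Y = affineMatrix b Z ↔ a = b ∧ Y = Z := by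
  refine ⟨fun h => ⟨funext fun j => ?_, Matrix.ext fun i j => ?_⟩, fun ⟨ha, hY⟩ => ha ▸ hY ▸ rfl⟩
  · exact congr_fun₂ h 0 j.succ
  · exact congr_fun₂ h i.succ j.succ

theorem affineMatrix_zero_one : affineMatrix (0 : Fin n → R) 1 = 1 := by
  ext i j
  cases i using Fin.cases <;> cases j using Fin.cases <;>
    simp [affineMatrix, one_apply, Fin.succ_ne_zero, (Fin.succ_ne_zero _).symm]

theorem affineMatrix_mul (a b : Fin n → R) (Y Z : Matrix (Fin n) (Fin n) R) :
    affineMatrix a Y * affineMatrix b Z = affineMatrix (b + a ᵥ* Z) (Y * Z) := by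
  ext i j
  cases i using Fin.cases <;> cases j using Fin.cases <;>
    simp [affineMatrix, mul_apply, Fin.sum_univ_succ, vecMul, dotProduct]

theorem exists_affineMatrix_pow (a : Fin n → R) (Y : Matrix (Fin n) (Fin n) R) (N : ℕ) :
    ∃ b, affineMatrix a Y ^ N = affineMatrix b (Y ^ N) := by
  induction N with
  | zero => exact ⟨0, by simp [affineMatrix_zero_one]⟩
  | succ N ih =>
    obtain ⟨b, hb⟩ := ih
    exact ⟨a + b ᵥ* Y, by rw [pow_succ, hb, affineMatrix_mul, pow_succ]⟩

theorem pow_eq_one_of_affineMatrix_pow_eq_one {a : Fin n → R} {Y : Matrix (Fin n) (Fin n) R} {N : ℕ}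
    (h : affineMatrix a Y ^ N = 1) : Y ^ N = 1 := by
  obtain ⟨b, hb⟩ := exists_affineMatrix_pow a Y N
  rw [hb, ← affineMatrix_zero_one, affineMatrix_inj] at h
  exact h.2

theorem pow_eq_one_of_isConj_affineMatrix {X : Matrix (Fin (n + 1)) (Fin (n + 1)) R}
    {a : Fin n → R} {Y : Matrix (Fin n) (Fin n) R} {N : ℕ} (hX : IsConj X (affineMatrix a Y))
    (h : X ^ N = 1) : Y ^ N = 1 := by
  have hpow := hX.pow N
  rw [h, isConj_one_right] at hpow
  exact pow_eq_one_of_affineMatrix_pow_eq_one hpow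

theorem affineMatrix_one_pow (a : Fin n → R) (N : ℕ) :
    affineMatrix a 1 ^ N = affineMatrix (N • a) 1 := by
  induction N with
  | zero => simp [affineMatrix_zero_one]
  | succ N ih => rw [pow_succ, ih, affineMatrix_mul, vecMul_one, mul_one, succ_nsmul']

theorem det_affineMatrix (a : Fin n → R) (Y : Matrix (Fin n) (Fin n) R) :
    (affineMatrix a Y).det = Y.det := by
  have hminor : (affineMatrix a Y).submatrix (Fin.succAbove 0) Fin.succ = Y := rfl
  rw [det_succ_column_zero, Fin.sum_univ_succ, hminor]
  simp [affineMatrix]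

theorem isConj_affineMatrix {a b c : Fin n → R} {Y Z P : Matrix (Fin n) (Fin n) R}
    (hP : IsUnit P) (hYZ : P * Y = Z * P) (hab : a + c ᵥ* Y = c + b ᵥ* P) :
    IsConj (affineMatrix a Y) (affineMatrix b Z) := by
  have hunit : IsUnit (affineMatrix c P) := by
    rwa [isUnit_iff_isUnit_det, det_affineMatrix, ← isUnit_iff_isUnit_det]
  exact ⟨hunit.unit, by
    rw [IsUnit.unit_spec, SemiconjBy, affineMatrix_mul, affineMatrix_mul, hYZ, hab]⟩

theorem exists_isConj_affineMatrix_of_isConj {Y Z : Matrix (Fin n) (Fin n) R} (hYZ : IsConj Y Z)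
    (a : Fin n → R) : ∃ b, IsConj (affineMatrix a Y) (affineMatrix b Z) := by
  obtain ⟨P, hP⟩ := hYZ
  refine ⟨a ᵥ* (P⁻¹.1 : Matrix _ _ R), isConj_affineMatrix (c := 0) P.isUnit hP.eq ?_⟩
  simp [vecMul_vecMul]

theorem exists_isConj_affineMatrix [IsDomain R] [IsPrincipalIdealRing R]
    {X : Matrix (Fin (n + 1)) (Fin (n + 1)) R} (hdet : (X - 1).det = 0) :
    ∃ a Y, IsConj X (affineMatrix a Y) := by
  obtain ⟨b, i, hi⟩ := exists_basis_apply_eq_self hdet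
  let c := b.reindex (Equiv.swap i 0)
  have hc : X *ᵥ c 0 = c 0 := by simpa [c] using hi
  let Z := LinearMap.toMatrix c c (toLin' X)
  have hZ : Z = affineMatrix (fun j => Z 0 j.succ) (of fun i j => Z i.succ j.succ) := by
    have hcol (i) : Z i 0 = if i = 0 then 1 else 0 := by
      simp [Z, LinearMap.toMatrix_apply, hc, Finsupp.single_apply, eq_comm]
    ext i j
    cases i using Fin.cases <;> cases j using Fin.cases <;> simp [affineMatrix, hcol]
  refine ⟨fun j => Z 0 j.succ, of fun i j => Z i.succ j.succ, ?_⟩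
  rw [← hZ]
  have hconj : IsConj _ Z := isConj_toMatrix_toMatrix (Pi.basisFun R _) c (toLin' X)
  rwa [LinearMap.toMatrix_eq_toMatrix', LinearMap.toMatrix'_toLin'] at hconj

theorem eq_one_of_isConj_affineMatrix_one [IsDomain R] [CharZero R]
    {X : Matrix (Fin (n + 1)) (Fin (n + 1)) R} {a : Fin n → R} {N : ℕ} (hN : N ≠ 0)
    (hX : IsConj X (affineMatrix a 1)) (h : X ^ N = 1) : X = 1 := by
  have ha := hX.pow N
  rw [h, isConj_one_right, affineMatrix_one_pow, ← affineMatrix_zero_one, affineMatrix_inj] at ha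
  rwa [(smul_eq_zero_iff_right hN).mp ha.1, affineMatrix_zero_one, isConj_one_left] at hX

end Affine

section Eisenstein

/-- Multiplication by a primitive cube root of unity `ω` on `ℤ[ω]`, in the basis `1, ω`. -/
def eisensteinMatrix : Matrix (Fin 2) (Fin 2) ℤ := !![0, -1; 1, -1]

theorem sq_add_self_add_one_eq_zero_of_ne_one {Y : Matrix (Fin 2) (Fin 2) ℤ} (h3 : Y ^ 3 = 1)
    (h1 : Y ≠ 1) : Y ^ 2 + Y + 1 = 0 := by
  refine sq_add_self_add_one_eq_zero_of_det_ne_zero h3 fun hdet => h1 ?_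
  obtain ⟨a, y, hconj⟩ := exists_isConj_affineMatrix hdet
  have hy : y = 1 := by
    have hdet := det_sub_one_eq_zero_of_pow_three_eq_one (by simp)
      (pow_eq_one_of_isConj_affineMatrix hconj h3)
    rw [det_fin_one] at hdet
    ext i j
    rw [Subsingleton.elim i 0, Subsingleton.elim j 0]
    exact sub_eq_zero.mp hdet
  exact eq_one_of_isConj_affineMatrix_one three_ne_zero (hy ▸ hconj) h3

theorem exists_eq_of_sq_add_self_add_one_eq_zero {Y : Matrix (Fin 2) (Fin 2) ℤ}
    (hY : Y ^ 2 + Y + 1 = 0) : ∃ p q r, Y = !![p, q; r, -1 - p] ∧ p ^ 2 + p + 1 = -(q * r) := by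
  obtain ⟨p, q, r, s, rfl⟩ : ∃ p q r s, Y = !![p, q; r, s] := ⟨_, _, _, _, eta_fin_two Y⟩
  have h00 : p * p + q * r + p + 1 = 0 := by simpa [sq] using congr_fun₂ hY 0 0
  have h10 : r * p + s * r + r = 0 := by simpa [sq] using congr_fun₂ hY 1 0
  have hr : r ≠ 0 := by
    rintro rfl
    nlinarith [sq_nonneg (2 * p + 1)]
  have hs : s = -1 - p := mul_left_cancel₀ hr (by linarith)
  exact ⟨p, q, r, by rw [hs], by linarith⟩

theorem isConj_translate (p q r k : ℤ) : IsConj !![p, q; r, -1 - p]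
    !![p + k * r, q - k * (2 * p + 1 + k * r); r, -1 - (p + k * r)] := by
  refine ⟨⟨!![1, k; 0, 1], !![1, -k; 0, 1], ?_, ?_⟩, ?_⟩
  · simp [one_fin_two]
  · simp [one_fin_two]
  · simp only [SemiconjBy, mul_fin_two, EmbeddingLike.apply_eq_iff_eq, vecCons_inj, and_true]
    refine ⟨⟨?_, ?_⟩, ?_, ?_⟩ <;> ring

theorem isConj_swap (p q r : ℤ) : IsConj !![p, q; r, -1 - p] !![-1 - p, r; q, -1 - (-1 - p)] := by
  refine ⟨⟨!![0, 1; 1, 0], !![0, 1; 1, 0], ?_, ?_⟩, ?_⟩ <;> simp [SemiconjBy, one_fin_two]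

theorem isConj_eisensteinMatrix_of_isUnit {p q r : ℤ} (h : p ^ 2 + p + 1 = -(q * r))
    (hr : IsUnit r) : IsConj !![p, q; r, -1 - p] eisensteinMatrix := by
  have hrr : r * r = 1 := Int.isUnit_mul_self hr
  refine IsConj.symm ⟨⟨!![1, p; 0, r], !![1, -p * r; 0, r], ?_, ?_⟩, ?_⟩
  · simp [one_fin_two, hrr]
  · simp [one_fin_two, mul_assoc, hrr]
  · simp only [SemiconjBy, eisensteinMatrix, mul_fin_two, EmbeddingLike.apply_eq_iff_eq,
      vecCons_inj, and_true]
    refine ⟨⟨?_, ?_⟩, ?_, ?_⟩ <;> linarith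

theorem exists_abs_two_mul_add_one_le (p : ℤ) {r : ℤ} (hr : r ≠ 0) :
    ∃ k, |2 * (p + k * r) + 1| ≤ |r| := by
  refine ⟨-((2 * p + 1 + |r|) / (2 * r)), ?_⟩
  have hnonneg := Int.emod_nonneg (2 * p + 1 + |r|) (b := 2 * r) (by lia)
  have hlt := Int.emod_lt_abs (2 * p + 1 + |r|) (b := 2 * r) (by lia)
  have hdiv := Int.emod_add_mul_ediv (2 * p + 1 + |r|) (2 * r)
  rw [abs_mul, abs_two] at hlt
  rw [abs_le]
  constructor <;> linarith

theorem isConj_eisensteinMatrix {p q r : ℤ} (h : p ^ 2 + p + 1 = -(q * r)) :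
    IsConj !![p, q; r, -1 - p] eisensteinMatrix := by
  -- Reduction of the binary quadratic forms of discriminant `-3`: once `|2p + 1| ≤ |r|`, either
  -- `|q| < |r|` and swapping `q` and `r` decreases `|r|`, or `r` is a unit.
  induction hn : r.natAbs using Nat.strong_induction_on generalizing p q r with | _ n ih
  have hr : r ≠ 0 := by
    rintro rfl
    nlinarith [sq_nonneg (2 * p + 1)]
  obtain ⟨k, hk⟩ := exists_abs_two_mul_add_one_le p hr
  refine (isConj_translate p q r k).trans ?_
  have h' : (p + k * r) ^ 2 + (p + k * r) + 1 = -((q - k * (2 * p + 1 + k * r)) * r) := by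
    linear_combination h
  generalize p + k * r = p', q - k * (2 * p + 1 + k * r) = q' at hk h'
  by_cases hlt : q'.natAbs < n
  · exact (isConj_swap p' q' r).trans (ih _ hlt (by linear_combination h') rfl)
  refine isConj_eisensteinMatrix_of_isUnit h' (Int.isUnit_iff_abs_eq.mpr ?_)
  have hmul : p' ^ 2 + p' + 1 = |q'| * |r| := by
    rw [← abs_mul, ← abs_neg, ← h', abs_of_pos (by nlinarith [sq_nonneg (2 * p' + 1)])]
  have hpos : 0 < |r| := abs_pos.mpr hr
  have hle : |r| ≤ |q'| := by
    rw [Int.abs_eq_natAbs, Int.abs_eq_natAbs, hn]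
    exact_mod_cast not_lt.mp hlt
  nlinarith [sq_le_sq.mpr hk, abs_mul_abs_self r, mul_le_mul_of_nonneg_right hle hpos.le]

end Eisenstein

section OrderThree

theorem vecMul_eisensteinMatrix (a : Fin 2 → ℤ) : a ᵥ* eisensteinMatrix = ![a 1, -a 0 - a 1] := by
  ext i
  fin_cases i <;> simp [eisensteinMatrix, vecMul, dotProduct, sub_eq_add_neg]

theorem isConj_affineMatrix_eisensteinMatrix {a : Fin 2 → ℤ} {m k ε : ℤ} (hε : IsUnit ε)
    (h : a 0 - a 1 = 3 * m + k * ε) :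
    IsConj (affineMatrix a eisensteinMatrix) (affineMatrix ![k, 0] eisensteinMatrix) := by
  refine isConj_affineMatrix (c := ![a 1 + 2 * m, -m]) (P := diagonal fun _ => ε) ?_ ?_ ?_
  · rw [isUnit_iff_isUnit_det, det_diagonal]
    simpa using hε
  · exact (scalar_commute ε (.all ε) eisensteinMatrix).eq
  · rw [vecMul_eisensteinMatrix]
    ext i
    fin_cases i <;> simp <;> linarith

theorem exists_fin_two_isConj_affineMatrix_eisensteinMatrix (a : Fin 2 → ℤ) :
    ∃ k : Fin 2, IsConj (affineMatrix a eisensteinMatrix)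
      (affineMatrix ![(k : ℤ), 0] eisensteinMatrix) := by
  obtain ⟨m, h | h | h⟩ : ∃ m, a 0 - a 1 = 3 * m ∨ a 0 - a 1 = 3 * m + 1 ∨
      a 0 - a 1 = 3 * m - 1 := ⟨(a 0 - a 1 + 1) / 3, by lia⟩
  · exact ⟨0, isConj_affineMatrix_eisensteinMatrix isUnit_one (by simpa using h)⟩
  · exact ⟨1, isConj_affineMatrix_eisensteinMatrix isUnit_one (by simpa using h)⟩
  · exact ⟨1, isConj_affineMatrix_eisensteinMatrix isUnit_one.neg (h.trans (by norm_num; ring))⟩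

theorem exists_isConj_affineMatrix_eisensteinMatrix {X : Matrix (Fin 3) (Fin 3) ℤ} (h3 : X ^ 3 = 1)
    (h1 : X ≠ 1) : ∃ k : Fin 2, IsConj X (affineMatrix ![(k : ℤ), 0] eisensteinMatrix) := by
  obtain ⟨a, Y, hX⟩ :=
    exists_isConj_affineMatrix (det_sub_one_eq_zero_of_pow_three_eq_one (by decide) h3)
  have hY3 : Y ^ 3 = 1 := pow_eq_one_of_isConj_affineMatrix hX h3
  have hY1 : Y ≠ 1 := by
    rintro rfl
    exact h1 (eq_one_of_isConj_affineMatrix_one three_ne_zero hX h3)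
  obtain ⟨p, q, r, rfl, hpqr⟩ := exists_eq_of_sq_add_self_add_one_eq_zero
    (sq_add_self_add_one_eq_zero_of_ne_one hY3 hY1)
  obtain ⟨b, hb⟩ := exists_isConj_affineMatrix_of_isConj (isConj_eisensteinMatrix hpqr) a
  obtain ⟨k, hk⟩ := exists_fin_two_isConj_affineMatrix_eisensteinMatrix b
  exact ⟨k, hX.trans (hb.trans hk)⟩

theorem isConj_of_isConj_coe {ι : Type*} [Fintype ι] [DecidableEq ι] (hι : Odd (Fintype.card ι))
    {A B : SpecialLinearGroup ι ℤ} (h : IsConj (A : Matrix ι ι ℤ) B) : IsConj A B := by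
  obtain ⟨P, hP⟩ := h
  suffices ∃ Q : Matrix ι ι ℤ, Q.det = 1 ∧ SemiconjBy Q A B by
    obtain ⟨Q, hdet, hQ⟩ := this
    exact ⟨toUnits ⟨Q, hdet⟩, Subtype.ext hQ⟩
  obtain hdet | hdet := Int.isUnit_iff.mp (P.isUnit.map detMonoidHom)
  · exact ⟨P, hdet, hP⟩
  · have hneg : (-(P : Matrix ι ι ℤ)).det = 1 := by
      rw [det_neg, hι.neg_one_pow, ← coe_detMonoidHom, hdet, neg_one_mul, neg_neg]
    exact ⟨-P, hneg, hP.neg_left⟩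

/-- The affine transformation `v ↦ ω v + a` of `ℤ[ω]`, as a linear map on row vectors `(1, v)`. -/
def affineEisenstein (a : Fin 2 → ℤ) : SL(3, ℤ) :=
  ⟨affineMatrix a eisensteinMatrix, by rw [det_affineMatrix]; decide⟩

theorem affineEisenstein_pow_three (a : Fin 2 → ℤ) : affineEisenstein a ^ 3 = 1 := by
  suffices affineMatrix a eisensteinMatrix ^ 3 = 1 from Subtype.ext this
  rw [pow_three, affineMatrix_mul, affineMatrix_mul, ← affineMatrix_zero_one, affineMatrix_inj]
  refine ⟨?_, by decide⟩
  rw [← vecMul_vecMul]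
  ext i
  fin_cases i
  · simp [vecMul_eisensteinMatrix, vecHead, vecTail]
  · suffices -a 0 + (-a 1 - (-a 0 - a 1)) = 0 by
      simpa [vecMul_eisensteinMatrix, vecHead, vecTail]
    ring

theorem orderOf_affineEisenstein (a : Fin 2 → ℤ) : orderOf (affineEisenstein a) = 3 := by
  refine orderOf_eq_prime (affineEisenstein_pow_three a) fun h => ?_
  have hmat : affineMatrix a eisensteinMatrix = 1 := congr_arg Subtype.val h
  rw [← affineMatrix_zero_one, affineMatrix_inj] at hmat
  exact absurd hmat.2 (by decide)

theorem exists_eq_affineMatrix_of_commute {a : Fin 2 → ℤ} {A : SL(3, ℤ)}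
    (h : Commute A (affineEisenstein a)) :
    ∃ b p r, A.1 = affineMatrix b !![p, -r; r, p - r] ∧ p ^ 2 - p * r + r ^ 2 = 1 := by
  obtain ⟨x, b₀, b₁, u, p, q, v, r, s, hA⟩ :
      ∃ x b₀ b₁ u p q v r s, A.1 = !![x, b₀, b₁; u, p, q; v, r, s] :=
    ⟨_, _, _, _, _, _, _, _, _, eta_fin_three A.1⟩
  have hdet := A.2
  have hcomm : A.1 * affineMatrix a eisensteinMatrix = affineMatrix a eisensteinMatrix * A.1 :=
    congr_arg Subtype.val h.eq
  rw [hA] at hdet hcomm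
  rw [affineMatrix, eisensteinMatrix] at hcomm
  have h10 : u = -v := by
    simpa [mul_apply, Fin.sum_univ_three] using congr_fun₂ hcomm 1 0
  have h20 : v = u + -v := by
    simpa [mul_apply, Fin.sum_univ_three] using congr_fun₂ hcomm 2 0
  have h11 : u * a 0 + q = -r := by
    simpa [mul_apply, Fin.sum_univ_three] using congr_fun₂ hcomm 1 1
  have h12 : u * a 1 + -p + -q = -s := by
    simpa [mul_apply, Fin.sum_univ_three] using congr_fun₂ hcomm 1 2
  obtain rfl : v = 0 := by lia
  obtain rfl : u = 0 := by lia
  obtain rfl : q = -r := by lia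
  obtain rfl : s = p - r := by lia
  have hnorm : x * (p ^ 2 - p * r + r ^ 2) = 1 := by
    have hexpand : x * p * (p - r) - x * -r * r = 1 := by
      simpa [det_fin_three] using hdet
    linarith
  have hx : x = 1 := by
    refine Int.eq_one_or_neg_one_of_mul_eq_one hnorm |>.resolve_right ?_
    rintro rfl
    nlinarith [sq_nonneg (2 * p - r), sq_nonneg r]
  subst hx
  refine ⟨![b₀, b₁], p, r, hA.trans ?_, by linarith⟩
  ext i j
  fin_cases i <;> fin_cases j <;> rfl

theorem eq_of_commute_affineMatrix {a b c : Fin 2 → ℤ} {W : Matrix (Fin 2) (Fin 2) ℤ}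
    (hb : Commute (affineMatrix b W) (affineMatrix a eisensteinMatrix))
    (hc : Commute (affineMatrix c W) (affineMatrix a eisensteinMatrix)) : b = c := by
  rw [commute_iff_eq, affineMatrix_mul, affineMatrix_mul, affineMatrix_inj,
    vecMul_eisensteinMatrix] at hb hc
  have hb0 := congr_fun hb.1 0
  have hb1 := congr_fun hb.1 1
  have hc0 := congr_fun hc.1 0
  have hc1 := congr_fun hc.1 1
  simp only [Pi.add_apply, cons_val_zero, cons_val_one] at hb0 hb1 hc0 hc1
  ext i
  fin_cases i
  · exact (by linarith : b 0 = c 0)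
  · exact (by linarith : b 1 = c 1)

theorem exists_eq_eisensteinMatrix_pow {p r : ℤ} (h : p ^ 2 - p * r + r ^ 2 = 1) :
    ∃ j, !![p, -r; r, p - r] = eisensteinMatrix ^ j ∨
      !![p, -r; r, p - r] = -eisensteinMatrix ^ j := by
  have hp : p ^ 2 ≤ 1 ^ 2 := by nlinarith [sq_nonneg (p - 2 * r)]
  have hr : r ^ 2 ≤ 1 ^ 2 := by nlinarith [sq_nonneg (r - 2 * p)]
  obtain ⟨hp₁, hp₂⟩ := abs_le_of_sq_le_sq' hp one_pos.le
  obtain ⟨hr₁, hr₂⟩ := abs_le_of_sq_le_sq' hr one_pos.le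
  suffices ∃ j < 3, !![p, -r; r, p - r] = eisensteinMatrix ^ j ∨
      !![p, -r; r, p - r] = -eisensteinMatrix ^ j from this.imp fun _ => And.right
  interval_cases p <;> interval_cases r <;> first | lia | decide

theorem neg_eisensteinMatrix_pow_pow_ne_one {N : ℕ} (hN : Odd N) (j : ℕ) :
    (-eisensteinMatrix ^ j) ^ N ≠ 1 := by
  have hω : eisensteinMatrix ^ 3 = 1 := by decide
  have hcube : (-eisensteinMatrix ^ j) ^ 3 = -1 := by
    rw [Odd.neg_pow (by decide), pow_right_comm, hω, one_pow]
  intro h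
  have hneg : (-1 : Matrix (Fin 2) (Fin 2) ℤ) = 1 := by
    rw [← hN.neg_one_pow, ← hcube, pow_right_comm, h, one_pow]
  exact absurd hneg (by decide)

theorem mem_zpowers_of_commute {a : Fin 2 → ℤ} {A : SL(3, ℤ)} {N : ℕ} (hN : Odd N)
    (hA : A ^ N = 1) (h : Commute A (affineEisenstein a)) :
    A ∈ Subgroup.zpowers (affineEisenstein a) := by
  obtain ⟨b, p, r, hAb, hnorm⟩ := exists_eq_affineMatrix_of_commute h
  have hpow : !![p, -r; r, p - r] ^ N = 1 := by
    refine pow_eq_one_of_affineMatrix_pow_eq_one (a := b) ?_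
    rw [← hAb]
    exact congr_arg Subtype.val hA
  obtain ⟨j, hj | hj⟩ := exists_eq_eisensteinMatrix_pow hnorm
  · obtain ⟨c, hc⟩ := exists_affineMatrix_pow a eisensteinMatrix j
    rw [hj] at hAb
    have hbc : b = c := by
      refine eq_of_commute_affineMatrix (a := a) (W := eisensteinMatrix ^ j) ?_ ?_
      · rw [← hAb]
        exact h.map SpecialLinearGroup.coeMonoidHom
      · rw [← hc]
        exact Commute.pow_self _ j
    have hAj : A = affineEisenstein a ^ j := Subtype.ext (hAb.trans (hbc ▸ hc.symm))
    exact hAj ▸ Subgroup.npow_mem_zpowers _ j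
  · rw [hj] at hpow
    exact (neg_eisensteinMatrix_pow_pow_ne_one hN j hpow).elim

/-- Representatives of the two conjugacy classes of elements of order `3`: the split extension of
`ℤ[ω]` by the trivial lattice, and the nonsplit one. -/
def orderThreeRep (k : Fin 2) : SL(3, ℤ) :=
  affineEisenstein ![k, 0]

theorem isConj_orderThreeRep_pow_two (i : Fin 2) :
    IsConj (orderThreeRep i) (orderThreeRep i ^ 2) := by
  refine isConj_of_isConj_coe (by decide) ?_
  have hsq : (orderThreeRep i ^ 2 : SL(3, ℤ)).1 =
      affineMatrix ![(i : ℤ), -i] (eisensteinMatrix * eisensteinMatrix) := by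
    rw [sq]
    refine (affineMatrix_mul _ _ _ _).trans ?_
    rw [affineMatrix_inj]
    simp [vecMul_eisensteinMatrix]
  rw [hsq]
  refine isConj_affineMatrix (c := 0) (P := !![1, -1; 0, -1]) ?_ (by decide) ?_
  · rw [isUnit_iff_isUnit_det]
    simp
  · simp

theorem isConj_orderThreeRep_pow (i : Fin 2) {k : ℕ} (hk : k.Coprime 3) :
    IsConj (orderThreeRep i) (orderThreeRep i ^ k) := by
  have hmod : k % 3 = 1 ∨ k % 3 = 2 := by
    have hdvd := (Nat.prime_three.coprime_iff_not_dvd).mp hk.symm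
    lia
  rw [← pow_mod_orderOf, show orderOf (orderThreeRep i) = 3 from orderOf_affineEisenstein _]
  obtain h | h := hmod
  · rw [h, pow_one]
  · exact h ▸ isConj_orderThreeRep_pow_two i

theorem not_isConj_orderThreeRep : ¬ IsConj (orderThreeRep 0) (orderThreeRep 1) := by
  intro h
  -- `(T - 1) ^ 2` is divisible by `3` for the split extension only.
  obtain ⟨P, hP⟩ := SpecialLinearGroup.coeMonoidHom.map_isConj h
  have hsq : (P : Matrix (Fin 3) (Fin 3) ℤ) * ((orderThreeRep 0).1 - 1) ^ 2 =
      ((orderThreeRep 1).1 - 1) ^ 2 * P :=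
    ((hP.sub_right (.one_right _)).pow_right 2).eq
  obtain ⟨M, hM⟩ : ∃ M, ((orderThreeRep 0).1 - 1) ^ 2 = (3 : ℤ) • M :=
    ⟨affineMatrix 0 (-eisensteinMatrix) - affineMatrix 0 0, by decide⟩
  have hdiv : ((orderThreeRep 1).1 - 1) ^ 2 = (3 : ℤ) • ((P : Matrix _ _ ℤ) * M * P⁻¹.1) := by
    rw [← P.mul_inv_cancel_right (((orderThreeRep 1).1 - 1) ^ 2), ← hsq, hM, mul_smul_comm,
      smul_mul_assoc]
  have hentry : (((orderThreeRep 1).1 - 1) ^ 2 : Matrix _ _ ℤ) 0 1 = -1 := by decide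
  rw [hdiv, Matrix.smul_apply, smul_eq_mul] at hentry
  lia

theorem exists_isConj_orderThreeRep {A : SL(3, ℤ)} (hA : orderOf A = 3) :
    ∃ i, IsConj A (orderThreeRep i) := by
  have h3 : A ^ 3 = 1 := orderOf_dvd_iff_pow_eq_one.mp hA.dvd
  have h1 : A.1 ≠ 1 := fun h => by
    have hA1 : A = 1 := Subtype.ext h
    simp [hA1] at hA
  obtain ⟨i, hi⟩ := exists_isConj_affineMatrix_eisensteinMatrix (congr_arg Subtype.val h3) h1
  exact ⟨i, isConj_of_isConj_coe (by decide) hi⟩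

theorem isSelfCentralizingTransversal_orderThreeRep :
    IsSelfCentralizingTransversal 3 orderThreeRep where
  orderOf_eq _ := orderOf_affineEisenstein _
  exists_isConj _ := exists_isConj_orderThreeRep
  eq_of_isConj i j h := by
    fin_cases i <;> fin_cases j
    · rfl
    · exact (not_isConj_orderThreeRep h).elim
    · exact (not_isConj_orderThreeRep h.symm).elim
    · rfl
  isConj_pow i _ := isConj_orderThreeRep_pow i
  mem_zpowers _ A k hA := mem_zpowers_of_commute (Odd.pow (by decide))
    (hA ▸ pow_orderOf_eq_one A)

end OrderThree

/-- The number of orbits of simultaneous conjugation of `SL₃(ℤ)` on the set of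
`n`-tuples of pairwise commuting elements of 3-power order equals `3ⁿ`. -/
theorem sl3_orbit_count_three (n : ℕ) (hn : 1 ≤ n) :
    Nat.card (Quot (tupleConj (pTuples (Matrix.SpecialLinearGroup (Fin 3) ℤ) 3 n))) =
      3 ^ n := by
  have hpoints := Projectivization.card' (ZMod 3) (Fin n → ZMod 3)
  rw [Nat.card_fun, Nat.card_zmod, Nat.card_fin] at hpoints
  rw [isSelfCentralizingTransversal_orderThreeRep.card_quot_tupleConj, Nat.card_fin, hpoints,
    mul_comm]
end

section
/- Let n ≥ 1. The number of orbits of the simultaneous conjugation action of SL_3(ℤ) on the set SL_3(ℤ)_{n,2} of n-tuples of pairwise commuting elements of 2-power order equals 2^{2n+1} − 2^{n+1} + 1. -/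
/-
Every `n`-tuple generating a subgroup isomorphic to a finite group `A` factors as `φ ∘ x`, with
`x` a generating tuple of `A` and `φ : A ↪ G`, uniquely up to `Aut A`, which acts freely on the
generating tuples. Hence the tuples of type `A` have `#(generating tuples) * #(classes of
embeddings) / #(Aut A)` orbits.

An element of order four of `SL₃(ℤ)` generates its own centralizer, and the elements `x` of order
two satisfy `tr x = -1`, so that `1 + x` has rank one. It follows that commuting elements of
`2`-power order generate one of `1`, `C₂`, `C₄`, `C₂ × C₂`. These have `1`, `2`, `2` and `6` classes
of embeddings, which gives `1 + 2 (2ⁿ - 1) + (4ⁿ - 2ⁿ) + (2ⁿ - 1) (2ⁿ - 2)` orbits.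
-/

open Function Matrix MatrixGroups Subgroup

namespace CommutingTuples

section Orbits

variable {G : Type*} [Group G] {n : ℕ}

theorem equivalence_tupleConj (s : Set (Fin n → G)) : Equivalence (tupleConj s) where
  refl _ := ⟨1, fun _ => by simp⟩
  symm := by
    rintro a b ⟨g, hg⟩
    exact ⟨g⁻¹, fun i => by simp [← hg, mul_assoc]⟩
  trans := by
    rintro a b c ⟨g, hg⟩ ⟨h, hh⟩
    exact ⟨h * g, fun i => by simp [← hh, ← hg, mul_assoc]⟩

theorem quot_mk_eq_iff {s : Set (Fin n → G)} {a b : s} :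
    Quot.mk (tupleConj s) a = Quot.mk (tupleConj s) b ↔ tupleConj s a b :=
  (equivalence_tupleConj s).quot_mk_eq_iff a b

/-- No tuple of `s` is simultaneously conjugate to a tuple of `t`. -/
def ConjDisjoint (s t : Set (Fin n → G)) : Prop :=
  ∀ a ∈ s, ∀ b ∈ t, ¬∃ g : G, ∀ i, g * a i * g⁻¹ = b i

theorem ConjDisjoint.union_right {s t u : Set (Fin n → G)} (ht : ConjDisjoint s t)
    (hu : ConjDisjoint s u) : ConjDisjoint s (t ∪ u) := by
  rintro a ha b (hb | hb)
  exacts [ht a ha b hb, hu a ha b hb]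

theorem nonempty_sum_equiv_quot_union {s t : Set (Fin n → G)} (h : ConjDisjoint s t) :
    Nonempty (Quot (tupleConj s) ⊕ Quot (tupleConj t) ≃ Quot (tupleConj (s ∪ t))) := by
  let f : Quot (tupleConj s) → Quot (tupleConj (s ∪ t)) :=
    Quot.map (Set.inclusion Set.subset_union_left) fun _ _ => id
  let g : Quot (tupleConj t) → Quot (tupleConj (s ∪ t)) :=
    Quot.map (Set.inclusion Set.subset_union_right) fun _ _ => id
  have hf : Injective f := by
    rintro ⟨a⟩ ⟨b⟩ hab
    exact quot_mk_eq_iff.2 ((quot_mk_eq_iff (s := s ∪ t)).1 hab)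
  have hg : Injective g := by
    rintro ⟨a⟩ ⟨b⟩ hab
    exact quot_mk_eq_iff.2 ((quot_mk_eq_iff (s := s ∪ t)).1 hab)
  have hfg : ∀ a b, f a ≠ g b := by
    rintro ⟨a⟩ ⟨b⟩ hab
    exact h a a.2 b b.2 (quot_mk_eq_iff.1 hab)
  refine ⟨Equiv.ofBijective (Sum.elim f g) ⟨hf.sumElim hg hfg, ?_⟩⟩
  rintro ⟨a, ha | ha⟩
  exacts [⟨.inl (Quot.mk _ ⟨a, ha⟩), rfl⟩, ⟨.inr (Quot.mk _ ⟨a, ha⟩), rfl⟩]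

theorem finite_quot_union {s t : Set (Fin n → G)} (h : ConjDisjoint s t)
    [Finite (Quot (tupleConj s))] [Finite (Quot (tupleConj t))] :
    Finite (Quot (tupleConj (s ∪ t))) :=
  (nonempty_sum_equiv_quot_union h).elim fun e => Finite.of_equiv _ e

theorem card_quot_union {s t : Set (Fin n → G)} (h : ConjDisjoint s t)
    [Finite (Quot (tupleConj s))] [Finite (Quot (tupleConj t))] :
    Nat.card (Quot (tupleConj (s ∪ t))) =
      Nat.card (Quot (tupleConj s)) + Nat.card (Quot (tupleConj t)) := by
  obtain ⟨e⟩ := nonempty_sum_equiv_quot_union h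
  rw [← Nat.card_congr e, Nat.card_sum]

end Orbits

section Types

variable (A G : Type*) [Group A] [Group G] (n : ℕ)

/-- The `n`-tuples that generate a subgroup isomorphic to `A`. -/
def tuplesOfType : Set (Fin n → G) :=
  {t | Nonempty (A ≃* closure (Set.range t))}

/-- The `n`-tuples that generate `A`. -/
def genTuples : Set (Fin n → A) :=
  {x | closure (Set.range x) = ⊤}

/-- Embeddings `A ↪ G` up to conjugation in `G`. -/
def embConj : Setoid {φ : A →* G // Injective φ} where
  r φ ψ := ∃ g : G, ∀ a, g * φ.1 a * g⁻¹ = ψ.1 a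
  iseqv :=
    { refl := fun _ => ⟨1, fun _ => by simp⟩
      symm := by
        rintro φ ψ ⟨g, hg⟩
        exact ⟨g⁻¹, fun a => by simp [← hg, mul_assoc]⟩
      trans := by
        rintro φ ψ χ ⟨g, hg⟩ ⟨h, hh⟩
        exact ⟨h * g, fun a => by simp [← hh, ← hg, mul_assoc]⟩ }

/-- The conjugacy classes of embeddings `A ↪ G`. -/
def EmbClass : Type _ :=
  Quotient (embConj A G)

variable {A G n}

theorem closure_range_comp (φ : A →* G) {x : Fin n → A} (hx : x ∈ genTuples A n) :
    closure (Set.range fun i => φ (x i)) = φ.range := by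
  rw [Set.range_comp' φ x, ← MonoidHom.map_closure, show closure (Set.range x) = ⊤ from hx,
    MonoidHom.range_eq_map]

theorem mem_tuplesOfType_iff {t : Fin n → G} :
    t ∈ tuplesOfType A G n ↔
      ∃ φ : A →* G, Injective φ ∧ ∃ x ∈ genTuples A n, ∀ i, φ (x i) = t i := by
  constructor
  · rintro ⟨e⟩
    let φ : A →* G := (closure (Set.range t)).subtype.comp e.toMonoidHom
    let x : Fin n → A := fun i => e.symm ⟨t i, subset_closure (Set.mem_range_self i)⟩
    have hφ : Injective φ := Subtype.val_injective.comp e.injective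
    have hφx : ∀ i, φ (x i) = t i := fun i => by simp [φ, x]
    refine ⟨φ, hφ, x, Subgroup.map_injective hφ ?_, hφx⟩
    rw [MonoidHom.map_closure, ← Set.range_comp, ← MonoidHom.range_eq_map,
      MonoidHom.range_comp, MonoidHom.range_eq_top.2 e.surjective, ← MonoidHom.range_eq_map,
      Subgroup.range_subtype]
    exact congrArg (fun f => Subgroup.closure (Set.range f)) (funext hφx)
  · rintro ⟨φ, hφ, x, hx, hφx⟩
    have hrange : φ.range = closure (Set.range t) := by
      rw [← closure_range_comp φ hx, funext hφx]
    exact ⟨(MonoidHom.ofInjective hφ).trans (MulEquiv.subgroupCongr hrange)⟩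

theorem exists_mulAut_of_comp_eq {φ ψ : A →* G} (hφ : Injective φ) (hψ : Injective ψ)
    {x y : Fin n → A} (hx : x ∈ genTuples A n) (hy : y ∈ genTuples A n)
    (h : ∀ i, φ (x i) = ψ (y i)) :
    ∃ α : MulAut A, (∀ i, α (x i) = y i) ∧ ∀ a, φ a = ψ (α a) := by
  have hrange : φ.range = ψ.range := by
    rw [← closure_range_comp φ hx, ← closure_range_comp ψ hy, funext h]
  let α : MulAut A := (MonoidHom.ofInjective hφ).trans
    ((MulEquiv.subgroupCongr hrange).trans (MonoidHom.ofInjective hψ).symm)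
  have hα : ∀ a, ψ (α a) = φ a := fun a =>
    congrArg Subtype.val ((MonoidHom.ofInjective hψ).apply_symm_apply _)
  exact ⟨α, fun i => hψ (by rw [hα, h]), fun a => (hα a).symm⟩

theorem mulAut_ext_of_genTuples {x : Fin n → A} (hx : x ∈ genTuples A n) {α β : MulAut A}
    (h : ∀ i, α (x i) = β (x i)) : α = β := by
  have : α.toMonoidHom = β.toMonoidHom :=
    MonoidHom.eq_of_eqOn_dense hx (by rintro _ ⟨i, rfl⟩; exact h i)
  exact MulEquiv.toMonoidHom_injective this

theorem comp_mem_genTuples (α : MulAut A) {x : Fin n → A} (hx : x ∈ genTuples A n) :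
    (fun i => α (x i)) ∈ genTuples A n :=
  (closure_range_comp α.toMonoidHom hx).trans (MonoidHom.range_eq_top.2 α.surjective)

theorem conj_mem_tuplesOfType {t : Fin n → G} (ht : t ∈ tuplesOfType A G n) (g : G) :
    (fun i => g * t i * g⁻¹) ∈ tuplesOfType A G n := by
  obtain ⟨φ, hφ, x, hx, hφx⟩ := mem_tuplesOfType_iff.1 ht
  exact mem_tuplesOfType_iff.2 ⟨(MulAut.conj g).toMonoidHom.comp φ,
    (MulAut.conj g).injective.comp hφ, x, hx, fun i => by simp [hφx]⟩

theorem conjDisjoint_of_isEmpty_mulEquiv {B : Type*} [Group B] (hAB : IsEmpty (A ≃* B)) :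
    ConjDisjoint (tuplesOfType A G n) (tuplesOfType B G n) := by
  rintro s hs t ⟨e'⟩ ⟨g, hg⟩
  obtain ⟨e⟩ := funext hg ▸ conj_mem_tuplesOfType hs g
  exact hAB.false (e.trans e'.symm)

theorem conjDisjoint_of_card_ne {B : Type*} [Group B] (hAB : Nat.card A ≠ Nat.card B) :
    ConjDisjoint (tuplesOfType A G n) (tuplesOfType B G n) :=
  conjDisjoint_of_isEmpty_mulEquiv ⟨fun e => hAB (Nat.card_congr e.toEquiv)⟩

theorem exists_quot_mk_comp_eq (o : Quot (tupleConj (tuplesOfType A G n))) :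
    ∃ (φ : {φ : A →* G // Injective φ}) (x : genTuples A n)
      (h : (fun i => φ.1 (x.1 i)) ∈ tuplesOfType A G n), Quot.mk _ ⟨_, h⟩ = o := by
  rcases o with ⟨t, ht⟩
  obtain ⟨φ, hφ, x, hx, hφx⟩ := mem_tuplesOfType_iff.1 ht
  obtain rfl := funext hφx
  exact ⟨⟨φ, hφ⟩, ⟨x, hx⟩, ht, rfl⟩

/- Each orbit `o` has a representative `φ ∘ x` with `φ` an embedding and `x` generating `A`;
all its other such presentations are `(c_g φ α) ∘ (α⁻¹ x)`, and `α` is determined by `α⁻¹ x`. -/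
theorem nonempty_quot_prod_mulAut_equiv :
    Nonempty (Quot (tupleConj (tuplesOfType A G n)) × MulAut A ≃
      genTuples A n × EmbClass A G) := by
  choose φ x h ho using exists_quot_mk_comp_eq (A := A) (G := G) (n := n)
  let f : Quot (tupleConj (tuplesOfType A G n)) × MulAut A → genTuples A n × EmbClass A G :=
    fun p => (⟨fun i => p.2⁻¹ ((x p.1).1 i), comp_mem_genTuples _ (x p.1).2⟩,
      Quotient.mk _ ⟨(φ p.1).1.comp p.2.toMonoidHom, (φ p.1).2.comp p.2.injective⟩)
  refine ⟨Equiv.ofBijective f ⟨?_, ?_⟩⟩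
  · rintro ⟨o, α⟩ ⟨o', α'⟩ hf
    obtain ⟨hx, hφ⟩ := Prod.ext_iff.1 hf
    have hx' : ∀ i, α⁻¹ ((x o).1 i) = α'⁻¹ ((x o').1 i) := congrFun (congrArg Subtype.val hx)
    obtain ⟨g, hg⟩ := Quotient.exact hφ
    obtain rfl : o = o' := by
      rw [← ho o, ← ho o']
      refine quot_mk_eq_iff.2 ⟨g, fun i => ?_⟩
      calc g * (φ o).1 ((x o).1 i) * g⁻¹
          = g * (φ o).1 (α (α⁻¹ ((x o).1 i))) * g⁻¹ := by rw [MulAut.apply_inv_self]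
        _ = (φ o').1 (α' (α⁻¹ ((x o).1 i))) := hg _
        _ = (φ o').1 ((x o').1 i) := by rw [hx', MulAut.apply_inv_self]
    exact Prod.ext rfl (inv_injective (mulAut_ext_of_genTuples (x o).2 hx'))
  · rintro ⟨⟨y, hy⟩, ⟨ψ, hψ⟩⟩
    let o := Quot.mk (tupleConj (tuplesOfType A G n))
      ⟨fun i => ψ (y i), mem_tuplesOfType_iff.2 ⟨ψ, hψ, y, hy, fun _ => rfl⟩⟩
    obtain ⟨g, hg⟩ := quot_mk_eq_iff.1 (ho o)
    obtain ⟨α, hα, hψα⟩ := exists_mulAut_of_comp_eq (φ := (MulAut.conj g).toMonoidHom.comp (φ o).1)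
      ((MulAut.conj g).injective.comp (φ o).2) hψ (x o).2 hy hg
    refine ⟨⟨o, α⁻¹⟩, Prod.ext (Subtype.ext (funext hα)) (Quotient.sound ⟨g, fun a => ?_⟩)⟩
    simpa using hψα (α⁻¹ a)

theorem card_quot_mul_card_mulAut :
    Nat.card (Quot (tupleConj (tuplesOfType A G n))) * Nat.card (MulAut A) =
      Nat.card (genTuples A n) * Nat.card (EmbClass A G) := by
  obtain ⟨e⟩ := nonempty_quot_prod_mulAut_equiv (A := A) (G := G) (n := n)
  simpa only [Nat.card_prod] using Nat.card_congr e

theorem finite_quot_tuplesOfType [Finite A] (h : Nat.card (EmbClass A G) ≠ 0) :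
    Finite (Quot (tupleConj (tuplesOfType A G n))) := by
  have := Nat.finite_of_card_ne_zero h
  obtain ⟨e⟩ := nonempty_quot_prod_mulAut_equiv (A := A) (G := G) (n := n)
  have := Finite.of_equiv _ e.symm
  exact Finite.of_injective (fun o => (o, (1 : MulAut A))) (Prod.mk_left_injective 1)

theorem tuplesOfType_subset_pTuples {C : Type*} [CommGroup C] {p : ℕ} [Fact p.Prime]
    (hC : IsPGroup p C) : tuplesOfType C G n ⊆ pTuples G p n := by
  intro t ht
  obtain ⟨φ, hφ, x, -, hφx⟩ := mem_tuplesOfType_iff.1 ht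
  obtain rfl := funext hφx
  exact ⟨fun i j => (Commute.all _ _).map φ,
    fun i => by simpa only [orderOf_injective φ hφ] using IsPGroup.iff_orderOf.1 hC (x i)⟩

end Types

section GeneratingTuples

variable {C : Type*} [CommGroup C]

theorem genTuples_eq_of_card_eq_pow_succ [IsCyclic C] {p k : ℕ} [Fact p.Prime]
    (hC : Nat.card C = p ^ (k + 1)) (n : ℕ) :
    genTuples C n = {x | ∀ i, x i ∈ (powMonoidHom (p ^ k) : C →* C).ker}ᶜ := by
  have hp : 1 < p := (Fact.out : p.Prime).one_lt
  have : Finite C := Nat.finite_of_card_ne_zero (by rw [hC]; positivity)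
  ext x
  rw [Set.mem_compl_iff, Set.mem_ofPred_eq, not_forall]
  constructor
  · intro hx
    by_contra! hker
    have htop : (powMonoidHom (p ^ k) : C →* C).ker = ⊤ := by
      rw [eq_top_iff, ← show closure (Set.range x) = ⊤ from hx, closure_le]
      exact Set.range_subset_iff.2 hker
    have hcard := IsCyclic.card_powMonoidHom_ker C (p ^ k)
    rw [htop, card_top, hC, Nat.gcd_eq_right (pow_dvd_pow p k.le_succ)] at hcard
    exact (Nat.pow_lt_pow_right hp k.lt_succ_self).ne' hcard
  · rintro ⟨i, hi⟩
    have horder : orderOf (x i) = Nat.card C := by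
      rw [hC]
      exact orderOf_eq_prime_pow hi (hC ▸ pow_card_eq_one')
    have htop : zpowers (x i) = ⊤ := by
      rw [← card_eq_iff_eq_top, Nat.card_zpowers, horder]
    exact top_le_iff.1 (htop ▸ zpowers_le.2 (subset_closure (Set.mem_range_self i)))

theorem card_genTuples_of_card_eq_pow_succ [IsCyclic C] {p k : ℕ} [Fact p.Prime]
    (hC : Nat.card C = p ^ (k + 1)) (n : ℕ) :
    Nat.card (genTuples C n) = p ^ ((k + 1) * n) - p ^ (k * n) := by
  have hp : 0 < p := (Fact.out : p.Prime).pos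
  have : Finite C := Nat.finite_of_card_ne_zero (by rw [hC]; positivity)
  have hker : Nat.card (powMonoidHom (p ^ k) : C →* C).ker = p ^ k := by
    rw [IsCyclic.card_powMonoidHom_ker, hC, Nat.gcd_eq_right (pow_dvd_pow p k.le_succ)]
  have hpi : Nat.card {x : Fin n → C | ∀ i, x i ∈ (powMonoidHom (p ^ k) : C →* C).ker} =
      (p ^ k) ^ n := by
    have := Nat.card_congr (Equiv.subtypePiEquivPi
      (p := fun (_ : Fin n) c => c ∈ (powMonoidHom (p ^ k) : C →* C).ker))
    rwa [Nat.card_fun, Nat.card_fin, hker] at this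
  rw [genTuples_eq_of_card_eq_pow_succ hC, Nat.card_coe_set_eq, Set.ncard_compl, pow_mul, ← hC,
    pow_mul, ← hpi, Nat.card_fun, Nat.card_fin, Nat.card_coe_set_eq]

theorem genTuples_of_subsingleton (A : Type*) [Group A] [Subsingleton A] (n : ℕ) :
    genTuples A n = Set.univ :=
  Set.eq_univ_of_forall fun _ => Subsingleton.elim _ _

theorem mem_genTuples_kleinFour_iff {n : ℕ} {x : Fin n → ℤˣ × ℤˣ} :
    x ∈ genTuples (ℤˣ × ℤˣ) n ↔
      (∃ i, (x i).1 ≠ 1) ∧ (∃ i, (x i).2 ≠ 1) ∧ ∃ i, (x i).1 ≠ (x i).2 := by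
  constructor
  · intro hx
    have hχ : ∀ χ χ' : ℤˣ × ℤˣ →* ℤˣ, χ ≠ χ' → ∃ i, χ (x i) ≠ χ' (x i) := by
      intro χ χ' hne
      contrapose! hne
      exact MonoidHom.eq_of_eqOn_dense hx (by rintro _ ⟨i, rfl⟩; exact hne i)
    have hne : ∀ {χ χ' : ℤˣ × ℤˣ →* ℤˣ} (a : ℤˣ × ℤˣ), χ a ≠ χ' a → χ ≠ χ' :=
      fun a h h' => h (DFunLike.congr_fun h' a)
    exact ⟨hχ (.fst _ _) 1 (hne (-1, 1) (by decide)), hχ (.snd _ _) 1 (hne (1, -1) (by decide)),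
      hχ (.fst _ _) (.snd _ _) (hne (1, -1) (by decide))⟩
  · rintro ⟨⟨i, hi⟩, ⟨j, hj⟩, ⟨k, hk⟩⟩
    have hspan : ∀ a b c : ℤˣ × ℤˣ, a.1 ≠ 1 → b.2 ≠ 1 → c.1 ≠ c.2 →
        ∀ v, ∃ r s t : Fin 2, a ^ r.1 * b ^ s.1 * c ^ t.1 = v := by decide
    have hmem : ∀ l, x l ∈ Subgroup.closure (Set.range x) := fun l =>
      subset_closure (Set.mem_range_self l)
    refine (eq_top_iff' _).2 fun v => ?_
    obtain ⟨r, s, t, rfl⟩ := hspan _ _ _ hi hj hk v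
    exact mul_mem (mul_mem (pow_mem (hmem i) _) (pow_mem (hmem j) _)) (pow_mem (hmem k) _)

theorem card_genTuples_kleinFour (n : ℕ) :
    Nat.card (genTuples (ℤˣ × ℤˣ) n) = (2 ^ n - 1) * (2 ^ n - 2) := by
  let e : (Fin n → ℤˣ × ℤˣ) ≃ (Fin n → ℤˣ) × (Fin n → ℤˣ) := Equiv.arrowProdEquivProdArrow _ _ _
  have he : ∀ x, x ∈ genTuples (ℤˣ × ℤˣ) n ↔ e x ∈ ({1}ᶜ : Finset (Fin n → ℤˣ)).offDiag := by
    intro x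
    simp only [mem_genTuples_kleinFour_iff, Finset.mem_offDiag, Finset.mem_compl,
      Finset.mem_singleton, ← Function.ne_iff]
    rfl
  have hcard : ({1}ᶜ : Finset (Fin n → ℤˣ)).card = 2 ^ n - 1 := by
    simp [Finset.card_compl]
  rw [Nat.card_congr (e.subtypeEquiv he), Nat.card_eq_fintype_card, Fintype.card_coe,
    Finset.offDiag_card, hcard, ← Nat.mul_sub_one, Nat.sub_sub]

theorem card_mulAut_kleinFour : Nat.card (MulAut (ℤˣ × ℤˣ)) = 6 := by
  rw [Nat.card_eq_fintype_card]
  decide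

end GeneratingTuples

section Embeddings

variable {A G : Type*} [Group A] [Group G] {ι : Type*}

theorem card_embClass_eq (φ : ι → {φ : A →* G // Injective φ})
    (hinj : ∀ i j, (embConj A G).r (φ i) (φ j) → i = j)
    (hsurj : ∀ ψ, ∃ i, (embConj A G).r (φ i) ψ) : Nat.card (EmbClass A G) = Nat.card ι := by
  refine (Nat.card_eq_of_bijective (fun i => Quotient.mk (embConj A G) (φ i)) ⟨?_, ?_⟩).symm
  · exact fun i j h => hinj i j (Quotient.exact h)
  · rintro ⟨ψ⟩
    obtain ⟨i, hi⟩ := hsurj ψ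
    exact ⟨i, Quotient.sound hi⟩

theorem card_embClass_eq_of_isCyclic [IsCyclic A] (ρ : ι → G)
    (hρ : ∀ i, orderOf (ρ i) = Nat.card A) (hinj : ∀ i j, IsConj (ρ i) (ρ j) → i = j)
    (hsurj : ∀ g, orderOf g = Nat.card A → ∃ i, IsConj (ρ i) g) :
    Nat.card (EmbClass A G) = Nat.card ι := by
  obtain ⟨a, ha⟩ := IsCyclic.exists_generator (α := A)
  have hcard : orderOf a = Nat.card A := orderOf_eq_card_of_forall_mem_zpowers ha
  have hφ : ∀ i, ∃ φ : {φ : A →* G // Injective φ}, φ.1 a = ρ i := by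
    intro i
    let e : A ≃* zpowers (ρ i) := mulEquivOfOrderOfEq ha (g' := ⟨ρ i, mem_zpowers _⟩)
      (fun ⟨_, k, hk⟩ => ⟨k, Subtype.ext hk⟩) (by rw [orderOf_mk, hρ, hcard])
    exact ⟨⟨(zpowers (ρ i)).subtype.comp e.toMonoidHom,
      Subtype.val_injective.comp e.injective⟩,
      congrArg Subtype.val (mulEquivOfOrderOfEq_apply_gen ha _ _)⟩
  choose φ hφa using hφ
  refine card_embClass_eq φ (fun i j ⟨g, hg⟩ => hinj i j ?_) fun ψ => ?_
  · exact isConj_iff.2 ⟨g, by simpa only [hφa] using hg a⟩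
  · obtain ⟨i, hi⟩ := hsurj (ψ.1 a) (by rw [orderOf_injective ψ.1 ψ.2, hcard])
    obtain ⟨g, hg⟩ := isConj_iff.1 hi
    refine ⟨i, g, DFunLike.congr_fun (f := (MulAut.conj g).toMonoidHom.comp (φ i).1)
      ((MonoidHom.eq_iff_eq_on_generator ha _ _).2 ?_)⟩
    rwa [← hφa] at hg

end Embeddings

section Traces

theorem trace_sq_fin_three {R : Type*} [CommRing R] (A : Matrix (Fin 3) (Fin 3) R) :
    (A ^ 2).trace = A.trace ^ 2 - 2 * A.adjugate.trace := by
  simp only [trace_fin_three, adjugate_fin_three, pow_two, mul_apply, Fin.sum_univ_three, of_apply,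
    cons_val]
  ring

theorem det_one_sub_fin_three {R : Type*} [CommRing R] (A : Matrix (Fin 3) (Fin 3) R) :
    (1 - A).det = 1 - A.trace + A.adjugate.trace - A.det := by
  simp only [det_fin_three, trace_fin_three, adjugate_fin_three, Matrix.sub_apply, one_apply_eq,
    one_apply_ne, ne_eq, Fin.reduceEq, not_false_eq_true, of_apply, cons_val]
  ring

end Traces

section NormalForms

theorem exists_isCoprime_eq_mul {R : Type*} [CommRing R] [IsDomain R] [IsBezout R] (x y : R) :
    ∃ d x' y' : R, IsCoprime x' y' ∧ x = d * x' ∧ y = d * y' := by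
  classical
  let := IsBezout.toGCDDomain R
  obtain ⟨x', y', hx, hy, h⟩ := extract_gcd x y
  exact ⟨gcd x y, x', y', (gcd_isUnit_iff _ _).1 h, hx, hy⟩

theorem exists_eq_smul_col {R : Type*} [CommRing R] [IsDomain R] [IsBezout R] (v : Fin 3 → R) :
    ∃ (e : R) (Q : SL(3, R)), v = e • Q.1.col 0 := by
  obtain ⟨d, x, y, ⟨u, w, huw⟩, hx, hy⟩ := exists_isCoprime_eq_mul (v 1) (v 2)
  obtain ⟨e, a, b, ⟨r, s, hrs⟩, ha, hb⟩ := exists_isCoprime_eq_mul (v 0) d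
  refine ⟨e, ⟨!![a, -s, 0; b * x, r * x, -w; b * y, r * y, u], ?_⟩, ?_⟩
  · simp only [det_fin_three, of_apply, cons_val]
    linear_combination (r * a + s * b) * huw + hrs
  · ext i
    fin_cases i
    · simp [ha]
    · simp [hx, hb, mul_assoc]
    · simp [hy, hb, mul_assoc]

theorem exists_isConj_block {R : Type*} [CommRing R] [IsDomain R] [IsBezout R] {g : SL(3, R)}
    (hg : g.1.trace = g⁻¹.1.trace) :
    ∃ (k : SL(3, R)) (x y a b c d : R), IsConj k g ∧ k.1 = !![1, x, y; 0, a, b; 0, c, d] := by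
  have hdet : (1 - g.1).det = 0 := by
    rw [det_one_sub_fin_three, g.2, hg, Matrix.SpecialLinearGroup.coe_inv]
    ring
  obtain ⟨v, hv0, hv⟩ := exists_mulVec_eq_zero_iff.2 hdet
  obtain ⟨e, Q, rfl⟩ := exists_eq_smul_col v
  have hfix : g.1 *ᵥ Q.1.col 0 = Q.1.col 0 := by
    rw [mulVec_smul, smul_eq_zero_iff_right (left_ne_zero_of_smul hv0), sub_mulVec, one_mulVec,
      sub_eq_zero] at hv
    exact hv.symm
  have hcol : (Q⁻¹ * g * Q).1.col 0 = Pi.single 0 1 := by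
    rw [← mulVec_single_one, Matrix.SpecialLinearGroup.coe_mul, Matrix.SpecialLinearGroup.coe_mul,
      ← mulVec_mulVec, ← mulVec_mulVec, mulVec_single_one, hfix, ← mulVec_single_one Q.1,
      mulVec_mulVec, ← Matrix.SpecialLinearGroup.coe_mul, inv_mul_cancel,
      Matrix.SpecialLinearGroup.coe_one, one_mulVec]
  generalize hk : Q⁻¹ * g * Q = k at hcol
  refine ⟨k, k.1 0 1, k.1 0 2, k.1 1 1, k.1 1 2, k.1 2 1, k.1 2 2,
    isConj_iff.2 ⟨Q, by simp [← hk, mul_assoc]⟩, ?_⟩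
  have h0 : k.1 0 0 = 1 := congrFun hcol 0
  have h1 : k.1 1 0 = 0 := congrFun hcol 1
  have h2 : k.1 2 0 = 0 := congrFun hcol 2
  conv_lhs => rw [eta_fin_three k.1, h0, h1, h2]

theorem exists_conj_of_intertwine {m ι : Type*} [DecidableEq m] [Fintype m]
    (hm : Odd (Fintype.card m)) {P : Matrix m m ℤ} (hP : IsUnit P.det)
    {g h : ι → SpecialLinearGroup m ℤ} (hPg : ∀ i, P * (g i).1 = (h i).1 * P) :
    ∃ k : SpecialLinearGroup m ℤ, ∀ i, k * g i * k⁻¹ = h i := by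
  rcases Int.isUnit_iff.1 hP with hdet | hdet
  · exact ⟨⟨P, hdet⟩, fun i => mul_inv_eq_iff_eq_mul.2 (Subtype.ext (hPg i))⟩
  · refine ⟨⟨-P, by rw [det_neg, hm.neg_one_pow, hdet]; rfl⟩,
      fun i => mul_inv_eq_iff_eq_mul.2 (Subtype.ext ?_)⟩
    exact (neg_mul _ _).trans ((congrArg Neg.neg (hPg i)).trans (mul_neg _ _).symm)

theorem isConj_of_intertwine {m : Type*} [DecidableEq m] [Fintype m]
    (hm : Odd (Fintype.card m)) {P : Matrix m m ℤ} (hP : IsUnit P.det)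
    {g h : SpecialLinearGroup m ℤ} (hPg : P * g.1 = h.1 * P) : IsConj g h := by
  obtain ⟨k, hk⟩ := exists_conj_of_intertwine hm hP (g := fun _ : Unit => g) (h := fun _ => h)
    fun _ => hPg
  exact isConj_iff.2 ⟨k, hk ()⟩

/-- The involutions of `SL₃(ℤ)` up to conjugation, for `κ = 0, 1`. -/
def involution (κ : ℤ) : SL(3, ℤ) :=
  ⟨!![1, κ, 0; 0, -1, 0; 0, 0, -1], by simp [det_fin_three]⟩

/-- The elements of order four of `SL₃(ℤ)` up to conjugation, for `κ = 0, 1`. -/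
def quarterTurn (κ : ℤ) : SL(3, ℤ) :=
  ⟨!![1, 0, κ; 0, 0, -1; 0, 1, 0], by simp [det_fin_three]⟩

theorem isConj_involution_of_block_eq_neg_one {k : SL(3, ℤ)} {x y : ℤ}
    (hk : k.1 = !![1, x, y; 0, -1, 0; 0, 0, -1]) : ∃ i : Fin 2, IsConj (involution i) k := by
  obtain ⟨d, x', y', ⟨u, w, huw⟩, rfl, rfl⟩ := exists_isCoprime_eq_mul x y
  obtain ⟨i, m, rfl⟩ : ∃ (i : Fin 2) (m : ℤ), d = 2 * m + i := by
    rcases d.even_or_odd' with ⟨m, rfl | rfl⟩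
    exacts [⟨0, m, by simp⟩, ⟨1, m, by simp⟩]
  refine ⟨i, IsConj.symm (isConj_of_intertwine (by decide)
    (P := !![1, m * x', m * y'; 0, x', y'; 0, -w, u]) ?_ ?_)⟩
  · have hdet : (!![1, m * x', m * y'; 0, x', y'; 0, -w, u]).det = 1 := by
      simp only [det_fin_three, of_apply, cons_val]
      linear_combination huw
    rw [hdet]
    exact isUnit_one
  · ext a b
    fin_cases a <;> fin_cases b <;> simp [hk, involution] <;> ring

end NormalForms

section Involutions

theorem eq_one_or_block_eq_neg_one {k : SL(3, ℤ)} {x y a b c d : ℤ}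
    (hk : k.1 = !![1, x, y; 0, a, b; 0, c, d]) (hsq : k ^ 2 = 1) :
    k = 1 ∨ k.1 = !![1, x, y; 0, -1, 0; 0, 0, -1] := by
  have hdet : a * d - b * c = 1 := by simpa [hk, det_fin_three] using k.2
  have hmul : !![1, x, y; 0, a, b; 0, c, d] * !![1, x, y; 0, a, b; 0, c, d] = 1 := by
    rw [← hk, ← Matrix.SpecialLinearGroup.coe_mul, ← pow_two, hsq,
      Matrix.SpecialLinearGroup.coe_one]
  rw [mul_fin_three, one_fin_three] at hmul
  simp only [mul_one, mul_zero, add_zero, one_mul, zero_mul, zero_add,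
    EmbeddingLike.apply_eq_iff_eq, vecCons_inj, and_true, true_and] at hmul
  obtain ⟨⟨hx, hy⟩, ⟨haa, hab⟩, hca, hdd⟩ := hmul
  have ha : a * (a + d) = 2 := by linear_combination haa + hdet
  have htr : a + d ≠ 0 := fun h => by simp [h] at ha
  obtain rfl : b = 0 := (mul_eq_zero_iff_right htr).1 (by linear_combination hab)
  obtain rfl : c = 0 := (mul_eq_zero_iff_right htr).1 (by linear_combination hca)
  obtain ⟨rfl, rfl⟩ | ⟨rfl, rfl⟩ := Int.mul_eq_one_iff_eq_one_or_neg_one.1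
    (show a * d = 1 by linear_combination hdet)
  · left
    obtain rfl : x = 0 := by linarith
    obtain rfl : y = 0 := by linarith
    exact Subtype.ext (hk.trans one_fin_three.symm)
  · exact .inr hk

theorem trace_eq_of_isConj {g h : SL(3, ℤ)} (hgh : IsConj g h) : g.1.trace = h.1.trace := by
  obtain ⟨c, rfl⟩ := isConj_iff.1 hgh
  rw [Matrix.SpecialLinearGroup.coe_mul, trace_mul_comm, ← Matrix.SpecialLinearGroup.coe_mul,
    inv_mul_cancel_left]

theorem exists_isConj_involution {g : SL(3, ℤ)} (hsq : g ^ 2 = 1) (hg : g ≠ 1) :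
    ∃ i : Fin 2, IsConj (involution i) g := by
  have hinv : g⁻¹ = g := inv_eq_of_mul_eq_one_left (by rw [← pow_two, hsq])
  obtain ⟨k, x, y, a, b, c, d, hkg, hk⟩ := exists_isConj_block (g := g) (by rw [hinv])
  obtain ⟨q, rfl⟩ := isConj_iff.1 hkg
  have hk1 : k ≠ 1 := by
    rintro rfl
    simp at hg
  have hksq : k ^ 2 = 1 := by simpa [conj_pow] using hsq
  obtain ⟨i, hi⟩ := isConj_involution_of_block_eq_neg_one
    ((eq_one_or_block_eq_neg_one hk hksq).resolve_left hk1)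
  exact ⟨i, hi.trans hkg⟩

theorem trace_eq_neg_one_of_sq_eq_one {g : SL(3, ℤ)} (hsq : g ^ 2 = 1) (hg : g ≠ 1) :
    g.1.trace = -1 := by
  obtain ⟨i, hi⟩ := exists_isConj_involution hsq hg
  rw [← trace_eq_of_isConj hi]
  simp [involution, trace_fin_three]

end Involutions

section OrderFour

theorem trace_sq (g : SL(3, ℤ)) : (g ^ 2).1.trace = g.1.trace ^ 2 - 2 * g⁻¹.1.trace :=
  trace_sq_fin_three g.1

theorem trace_eq_one_and_trace_inv_eq_one {g : SL(3, ℤ)} (h4 : g ^ 4 = 1) (h2 : g ^ 2 ≠ 1) :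
    g.1.trace = 1 ∧ g⁻¹.1.trace = 1 := by
  have hinv : g⁻¹ ^ 2 = g ^ 2 := by
    rw [inv_pow, inv_eq_iff_mul_eq_one, ← pow_add, h4]
  have htr : (g ^ 2).1.trace = -1 := trace_eq_neg_one_of_sq_eq_one (by rw [← pow_mul, h4]) h2
  have hg := trace_sq g
  have hg' := trace_sq g⁻¹
  rw [hinv, inv_inv] at hg'
  rw [htr] at hg hg'
  have hsum : (g.1.trace - 1) ^ 2 + (g⁻¹.1.trace - 1) ^ 2 = 0 := by linear_combination -hg - hg'
  constructor <;> nlinarith [hsum, sq_nonneg (g.1.trace - 1), sq_nonneg (g⁻¹.1.trace - 1)]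

theorem pow_four_eq_one_of_pow_eight {g : SL(3, ℤ)} (h8 : g ^ 8 = 1) : g ^ 4 = 1 := by
  by_contra h4
  obtain ⟨htr, htr'⟩ := trace_eq_one_and_trace_inv_eq_one (g := g ^ 2)
    (by rw [← pow_mul, h8]) (by rwa [← pow_mul])
  have hg := trace_sq g
  have hg' := trace_sq g⁻¹
  rw [inv_pow, inv_inv, htr'] at hg'
  rw [htr] at hg
  generalize g.1.trace = a at hg hg'
  generalize g⁻¹.1.trace = b at hg hg'
  have hab : (a - b) * (a + b + 2) = 0 := by linear_combination hg' - hg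
  obtain h | h := mul_eq_zero.1 hab
  · obtain rfl : a = b := by linarith
    have : a * (a - 2) = 1 := by linear_combination -hg
    obtain ⟨h, h'⟩ | ⟨h, h'⟩ := Int.mul_eq_one_iff_eq_one_or_neg_one.1 this <;> omega
  · nlinarith [sq_nonneg (a + 1)]

theorem pow_four_eq_one_of_pow_two_pow {g : SL(3, ℤ)} {k : ℕ} (hg : g ^ 2 ^ k = 1) :
    g ^ 4 = 1 := by
  induction k with
  | zero => simp_all
  | succ k ih =>
    rcases lt_or_ge k 2 with hk | hk
    · exact orderOf_dvd_iff_pow_eq_one.1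
        ((orderOf_dvd_of_pow_eq_one hg).trans (pow_dvd_pow 2 (n := 2) hk))
    · obtain ⟨m, rfl⟩ := Nat.exists_eq_add_of_le' hk
      refine ih ?_
      have := pow_four_eq_one_of_pow_eight (g := g ^ 2 ^ m) (by rw [← pow_mul, ← hg]; ring_nf)
      rw [← this, ← pow_mul]
      ring_nf

/- Reducing `a` modulo `c` and exchanging the two coefficients shrinks `|c|`; all these forms
have discriminant `-4`. -/
theorem exists_isUnit_form {a b c : ℤ} (h : a ^ 2 + b * c = -1) :
    ∃ p q : ℤ, IsUnit (c * p ^ 2 - 2 * a * p * q - b * q ^ 2) := by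
  induction hN : c.natAbs using Nat.strong_induction_on generalizing a b c with
  | _ N ih =>
    have hc0 : c ≠ 0 := by
      rintro rfl
      nlinarith [sq_nonneg a]
    by_cases hc1 : c.natAbs = 1
    · exact ⟨1, 0, by simpa [Int.isUnit_iff_natAbs_eq] using hc1⟩
    obtain ⟨r, t, ha, hr0, hrc⟩ : ∃ r t, a = r + c * t ∧ 0 ≤ r ∧ r < |c| :=
      ⟨a % c, a / c, (Int.emod_add_mul_ediv a c).symm, Int.emod_nonneg a hc0,
        Int.emod_lt_abs a hc0⟩
    obtain ⟨b', hb'⟩ : ∃ b', b' = b + 2 * a * t - c * t ^ 2 := ⟨_, rfl⟩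
    have hr : r ^ 2 + c * b' = -1 := by
      rw [hb']
      linear_combination h - (a + r - c * t) * ha
    have hlt : |b'| < |c| := by
      have hmul : |b'| * |c| = r ^ 2 + 1 := by
        rw [← abs_mul, show b' * c = -(r ^ 2 + 1) by linear_combination hr, abs_neg,
          abs_of_nonneg (by positivity)]
      have hc2 : 2 ≤ |c| := by
        rw [Int.abs_eq_natAbs]
        omega
      by_contra! hle
      nlinarith
    obtain ⟨p, q, hpq⟩ := ih b'.natAbs (hN ▸ Int.natAbs_lt_iff_sq_lt.2 (sq_lt_sq.2 hlt)) hr rfl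
    refine ⟨t * p - q, p, IsUnit.neg_iff _ |>.1 ?_⟩
    convert hpq using 1
    rw [hb', ha]
    ring

theorem isConj_quarterTurn_of_block {k : SL(3, ℤ)} {x y a b c d : ℤ}
    (hk : k.1 = !![1, x, y; 0, a, b; 0, c, d]) (htr : k.1.trace = 1) :
    ∃ i : Fin 2, IsConj (quarterTurn i) k := by
  obtain rfl : d = -a := by
    rw [hk, trace_fin_three_of] at htr
    linarith
  have hdet : a ^ 2 + b * c = -1 := by
    have hk1 := k.2
    rw [hk, det_fin_three] at hk1
    simp only [of_apply, cons_val] at hk1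
    linear_combination -hk1
  obtain ⟨p, q, hpq⟩ := exists_isUnit_form hdet
  obtain ⟨i, t, hi⟩ : ∃ (i : Fin 2) (t : ℤ),
      (x * p + y * q + x * (a * p + b * q) + y * (c * p - a * q)) + 2 * t = i := by
    rcases Int.even_or_odd' (x * p + y * q + x * (a * p + b * q) + y * (c * p - a * q)) with
      ⟨m, hm | hm⟩
    exacts [⟨0, -m, by simp [hm]⟩, ⟨1, -m, by simp [hm]⟩]
  refine ⟨i, isConj_of_intertwine (by decide)
    (P := !![1, t, t + x * p + y * q; 0, p, a * p + b * q; 0, q, c * p - a * q]) ?_ ?_⟩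
  · convert hpq using 1
    simp only [det_fin_three, of_apply, cons_val]
    ring
  · rw [hk, quarterTurn, mul_fin_three, mul_fin_three]
    simp only [mul_one, mul_zero, add_zero, one_mul, zero_mul, zero_add, mul_neg,
      EmbeddingLike.apply_eq_iff_eq, vecCons_inj, and_true, true_and]
    refine ⟨?_, ?_, ?_, ?_⟩
    · linear_combination -hi
    · linear_combination -p * hdet
    · ring
    · linear_combination -q * hdet

theorem exists_isConj_quarterTurn {g : SL(3, ℤ)} (h4 : g ^ 4 = 1) (h2 : g ^ 2 ≠ 1) :
    ∃ i : Fin 2, IsConj (quarterTurn i) g := by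
  obtain ⟨htr, htr'⟩ := trace_eq_one_and_trace_inv_eq_one h4 h2
  obtain ⟨k, x, y, a, b, c, d, hkg, hk⟩ := exists_isConj_block (htr.trans htr'.symm)
  obtain ⟨i, hi⟩ := isConj_quarterTurn_of_block hk ((trace_eq_of_isConj hkg).trans htr)
  exact ⟨i, hi.trans hkg⟩

theorem quarterTurn_sq (κ : ℤ) : (quarterTurn κ ^ 2).1 = !![1, κ, κ; 0, -1, 0; 0, 0, -1] := by
  rw [pow_two, Matrix.SpecialLinearGroup.coe_mul, quarterTurn, mul_fin_three]
  simp

theorem quarterTurn_inv (κ : ℤ) : (quarterTurn κ)⁻¹.1 = !![1, κ, 0; 0, 0, 1; 0, -1, 0] := by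
  rw [Matrix.SpecialLinearGroup.coe_inv, quarterTurn, adjugate_fin_three_of]
  simp

theorem exists_eq_of_commute_quarterTurn {κ : ℤ} {x : SL(3, ℤ)} (hx : Commute (quarterTurn κ) x) :
    ∃ r u v : ℤ, x.1 = !![1, r, r + κ * v; 0, u, -v; 0, v, u] ∧ u ^ 2 + v ^ 2 = 1 ∧
      2 * r = κ * (1 - u - v) := by
  have hmul : (quarterTurn κ).1 * x.1 = x.1 * (quarterTurn κ).1 := congrArg Subtype.val hx.eq
  have hdet := x.2
  rw [eta_fin_three x.1, quarterTurn, mul_fin_three, mul_fin_three] at hmul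
  rw [det_fin_three] at hdet
  simp only [zero_mul, one_mul, mul_zero, mul_one, zero_add, add_zero,
    neg_one_mul, mul_neg_one, EmbeddingLike.apply_eq_iff_eq, vecCons_inj, and_true] at hmul
  obtain ⟨⟨-, h01, h02⟩, ⟨h10, h11, -⟩, ⟨h20, h21, -⟩⟩ := hmul
  have h20 : x.1 2 0 = 0 := by linarith
  have h10 : x.1 1 0 = 0 := by linarith
  have hdet : x.1 0 0 * (x.1 1 1 ^ 2 + x.1 2 1 ^ 2) = 1 := by
    rw [h20, h10, ← h11, ← h21] at hdet
    linear_combination hdet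
  have h00 : x.1 0 0 = 1 := by
    rcases Int.mul_eq_one_iff_eq_one_or_neg_one.1 hdet with h | h
    · exact h.1
    · nlinarith [h.2]
  refine ⟨x.1 0 1, x.1 1 1, x.1 2 1, ?_, ?_, ?_⟩
  · conv_lhs => rw [eta_fin_three x.1, h20, h10, h00, ← h11, ← h21, ← h01]
  · simpa [h00] using hdet
  · rw [h00] at h02
    linear_combination h02 + h01 + κ * h21

theorem mem_zpowers_quarterTurn_of_commute {κ : ℤ} {x : SL(3, ℤ)}
    (hx : Commute (quarterTurn κ) x) : x ∈ zpowers (quarterTurn κ) := by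
  obtain ⟨r, u, v, hxval, huv, hr⟩ := exists_eq_of_commute_quarterTurn hx
  have hu : -1 ≤ u ∧ u ≤ 1 := by constructor <;> nlinarith
  have hcases : u = 1 ∧ v = 0 ∨ u = -1 ∧ v = 0 ∨ u = 0 ∧ v = 1 ∨ u = 0 ∧ v = -1 := by
    obtain ⟨hu, hu'⟩ := hu
    interval_cases u
    · simpa using huv
    · simpa using huv
    · simpa using huv
  rcases hcases with ⟨rfl, rfl⟩ | ⟨rfl, rfl⟩ | ⟨rfl, rfl⟩ | ⟨rfl, rfl⟩
  · obtain rfl : r = 0 := by linarith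
    refine mem_zpowers_iff.2 ⟨0, Subtype.ext ?_⟩
    simp [hxval, one_fin_three]
  · obtain rfl : r = κ := by linarith
    refine mem_zpowers_iff.2 ⟨2, Subtype.ext ((quarterTurn_sq r).trans ?_)⟩
    simp [hxval]
  · obtain rfl : r = 0 := by linarith
    refine mem_zpowers_iff.2 ⟨1, (zpow_one _).trans (Subtype.ext ?_)⟩
    simp [hxval, quarterTurn]
  · obtain rfl : r = κ := by linarith
    refine mem_zpowers_iff.2 ⟨-1, (_root_.zpow_neg_one _).trans (Subtype.ext ?_)⟩
    simp [quarterTurn_inv, hxval, -Matrix.SpecialLinearGroup.coe_inv]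

theorem mem_zpowers_of_commute {g x : SL(3, ℤ)} (h4 : g ^ 4 = 1) (h2 : g ^ 2 ≠ 1)
    (hx : Commute g x) : x ∈ zpowers g := by
  obtain ⟨i, hi⟩ := exists_isConj_quarterTurn h4 h2
  obtain ⟨c, hc⟩ := isConj_iff.1 hi.symm
  have hcomm : Commute (quarterTurn i) (c * x * c⁻¹) := hc ▸ (Commute.conj_iff c).2 hx
  obtain ⟨m, hm⟩ := mem_zpowers_iff.1 (mem_zpowers_quarterTurn_of_commute hcomm)
  rw [← hc, conj_zpow, mul_left_inj, mul_right_inj] at hm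
  exact mem_zpowers_iff.2 ⟨m, hm⟩

end OrderFour

section NonConjugate

theorem eq_of_isConj_of_map {G H : Type*} [Group G] [Group H] (f : G →* H) {ρ : Fin 2 → G}
    (h0 : f (ρ 0) = 1) (h1 : f (ρ 1) ≠ 1) {i j : Fin 2} (h : IsConj (ρ i) (ρ j)) : i = j := by
  have := f.map_isConj h
  fin_cases i <;> fin_cases j <;> simp_all

theorem eq_of_isConj_involution {i j : Fin 2} (h : IsConj (involution i) (involution j)) :
    i = j := by
  refine eq_of_isConj_of_map (SpecialLinearGroup.map (Int.castRingHom (ZMod 2)))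
    (ρ := fun i : Fin 2 => involution i) ?_ ?_ h
  · ext a b
    fin_cases a <;> fin_cases b <;> rfl
  · exact fun h => absurd (congrArg (fun A => A.1 0 1) h) (by decide)

theorem eq_of_isConj_quarterTurn {i j : Fin 2} (h : IsConj (quarterTurn i) (quarterTurn j)) :
    i = j := by
  refine eq_of_isConj_of_map (SpecialLinearGroup.map (Int.castRingHom (ZMod 2)))
    (ρ := fun i : Fin 2 => quarterTurn i ^ 2) ?_ ?_ (h.pow 2)
  · ext a b
    fin_cases a <;> fin_cases b <;> rfl
  · exact fun h => absurd (congrArg (fun A => A.1 0 1) h) (by decide)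

theorem orderOf_involution (κ : ℤ) : orderOf (involution κ) = 2 := by
  refine orderOf_eq_prime (Subtype.ext ?_) fun h => ?_
  · rw [pow_two, Matrix.SpecialLinearGroup.coe_mul, involution, mul_fin_three]
    simp [one_fin_three]
  · have h11 : (-1 : ℤ) = 1 := congrArg (fun A : SL(3, ℤ) => A.1 1 1) h
    omega

theorem orderOf_quarterTurn (κ : ℤ) : orderOf (quarterTurn κ) = 4 := by
  refine orderOf_eq_prime_pow (p := 2) (n := 1) (fun h => ?_) (Subtype.ext ?_)
  · have h11 := congrFun₂ ((quarterTurn_sq κ).symm.trans (congrArg Subtype.val h)) 1 1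
    simp at h11
  · rw [show 2 ^ (1 + 1) = 2 * 2 from rfl, pow_mul, pow_two (_ ^ 2),
      Matrix.SpecialLinearGroup.coe_mul, quarterTurn_sq, mul_fin_three]
    simp [one_fin_three]

end NonConjugate

section EmbClasses

theorem card_multiplicative_zmod (m : ℕ) : Nat.card (Multiplicative (ZMod m)) = m :=
  (Nat.card_congr Multiplicative.toAdd).trans (Nat.card_zmod m)

theorem card_embClass_of_subsingleton {A G : Type*} [Group A] [Group G] [Subsingleton A] :
    Nat.card (EmbClass A G) = 1 := by
  rw [card_embClass_eq (fun _ : Unit => ⟨1, injective_of_subsingleton _⟩) (by simp)]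
  · simp
  · exact fun ψ => ⟨(), 1, fun a => by simp [Subsingleton.elim a 1]⟩

theorem card_embClass_two : Nat.card (EmbClass (Multiplicative (ZMod 2)) SL(3, ℤ)) = 2 := by
  rw [card_embClass_eq_of_isCyclic (fun i : Fin 2 => involution i)]
  · simp
  · simp [orderOf_involution]
  · exact fun _ _ => eq_of_isConj_involution
  · intro g hg
    rw [card_multiplicative_zmod] at hg
    exact exists_isConj_involution (hg ▸ pow_orderOf_eq_one g) (by rintro rfl; simp at hg)

theorem card_embClass_four : Nat.card (EmbClass (Multiplicative (ZMod 4)) SL(3, ℤ)) = 2 := by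
  rw [card_embClass_eq_of_isCyclic (fun i : Fin 2 => quarterTurn i)]
  · simp
  · simp [orderOf_quarterTurn]
  · exact fun _ _ => eq_of_isConj_quarterTurn
  · intro g hg
    rw [card_multiplicative_zmod] at hg
    exact exists_isConj_quarterTurn (hg ▸ pow_orderOf_eq_one g) fun h =>
      absurd (hg ▸ orderOf_dvd_of_pow_eq_one h) (by decide)

end EmbClasses

section CommutingInvolutions

theorem exists_one_add_eq_vecMulVec {g : SL(3, ℤ)} (hsq : g ^ 2 = 1) (hg : g ≠ 1) :
    ∃ u v w : Fin 3 → ℤ, 1 + g.1 = vecMulVec v w ∧ u ⬝ᵥ v = 1 ∧ w ⬝ᵥ v = 2 := by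
  obtain ⟨i, hi⟩ := exists_isConj_involution hsq hg
  obtain ⟨Q, rfl⟩ := isConj_iff.1 hi
  have hQ : Q⁻¹.1 * Q.1 = 1 := congrArg Subtype.val (inv_mul_cancel Q)
  have hQ' : Q.1 * Q⁻¹.1 = 1 := congrArg Subtype.val (mul_inv_cancel Q)
  have hrank : 1 + (involution i).1 = vecMulVec (Pi.single 0 1) ![2, (i : ℤ), 0] := by
    ext a b
    fin_cases a <;> fin_cases b <;> simp [involution, vecMulVec_apply, one_fin_three]
  refine ⟨Pi.single 0 1 ᵥ* Q⁻¹.1, Q.1 *ᵥ Pi.single 0 1, ![2, (i : ℤ), 0] ᵥ* Q⁻¹.1, ?_, ?_, ?_⟩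
  · rw [← vecMulVec_mul, ← mul_vecMulVec, ← hrank, mul_add, add_mul, mul_one, hQ']
    rfl
  · rw [← dotProduct_mulVec, mulVec_mulVec, hQ]
    simp
  · rw [← dotProduct_mulVec, mulVec_mulVec, hQ, one_mulVec]
    simp

theorem mul_ne_one_of_sq_eq_one {G : Type*} [Group G] {g h : G} (hh : h ^ 2 = 1) (hgh : g ≠ h) :
    g * h ≠ 1 := fun h1 => hgh <| by
  rw [eq_inv_of_mul_eq_one_left h1, inv_eq_of_mul_eq_one_left (by rw [← pow_two, hh])]

theorem one_add_mul_one_add_eq_zero {g h : SL(3, ℤ)} (hg : g ^ 2 = 1) (hh : h ^ 2 = 1)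
    (hg1 : g ≠ 1) (hh1 : h ≠ 1) (hgh : g ≠ h) (hcomm : Commute g h) :
    (1 + g.1) * (1 + h.1) = 0 := by
  have hmul : g.1 * h.1 = h.1 * g.1 := congrArg Subtype.val hcomm.eq
  have htr : ((1 + g.1) * (1 + h.1)).trace = 0 := by
    have htr' : (g.1 * h.1).trace = -1 :=
      trace_eq_neg_one_of_sq_eq_one (g := g * h) (by rw [hcomm.mul_pow, hg, hh, one_mul])
        (mul_ne_one_of_sq_eq_one hh hgh)
    simp [add_mul, mul_add, trace_eq_neg_one_of_sq_eq_one hg hg1,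
      trace_eq_neg_one_of_sq_eq_one hh hh1, htr']
  obtain ⟨-, v, w, hvw, -⟩ := exists_one_add_eq_vecMulVec hg hg1
  obtain ⟨-, v', w', hvw', -⟩ := exists_one_add_eq_vecMulVec hh hh1
  have hcomm' : (1 + g.1) * (1 + h.1) = (1 + h.1) * (1 + g.1) := by
    simp only [add_mul, mul_add, one_mul, mul_one, hmul]
    abel
  rw [hvw, hvw', vecMulVec_mul_vecMulVec] at htr hcomm' ⊢
  rw [vecMulVec_mul_vecMulVec] at hcomm'
  rw [trace_vecMulVec, dotProduct_smul, smul_eq_mul, dotProduct_comm v, mul_eq_zero] at htr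
  rcases htr with h0 | h0
  · simp [h0]
  · rw [hcomm', h0]
    simp

theorem one_add_add_add_mul_eq_zero {g h : SL(3, ℤ)} (hg : g ^ 2 = 1) (hh : h ^ 2 = 1)
    (hg1 : g ≠ 1) (hh1 : h ≠ 1) (hgh : g ≠ h) (hcomm : Commute g h) :
    1 + g.1 + h.1 + (g * h).1 = 0 := by
  rw [← one_add_mul_one_add_eq_zero hg hh hg1 hh1 hgh hcomm, Matrix.SpecialLinearGroup.coe_mul]
  noncomm_ring

theorem eq_one_or_eq_of_commute {g h x : SL(3, ℤ)} (hg : g ^ 2 = 1) (hh : h ^ 2 = 1)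
    (hg1 : g ≠ 1) (hh1 : h ≠ 1) (hgh : g ≠ h) (hcomm : Commute g h) (hx : x ^ 2 = 1)
    (hgx : Commute x g) (hhx : Commute x h) : x = 1 ∨ x = g ∨ x = h ∨ x = g * h := by
  by_contra! hne
  obtain ⟨hx1, hxg, hxh, hxgh⟩ := hne
  have h2 : (1 + x.1) * 2 = 0 := by
    have hsum := one_add_add_add_mul_eq_zero hg hh hg1 hh1 hgh hcomm
    have eg := one_add_mul_one_add_eq_zero hx hg hx1 hg1 hxg hgx
    have eh := one_add_mul_one_add_eq_zero hx hh hx1 hh1 hxh hhx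
    have egh := one_add_mul_one_add_eq_zero hx (by rw [hcomm.mul_pow, hg, hh, one_mul]) hx1
      (mul_ne_one_of_sq_eq_one hh hgh) hxgh (hgx.mul_right hhx)
    calc (1 + x.1) * 2
        = (1 + x.1) * (1 + g.1) + (1 + x.1) * (1 + h.1) + (1 + x.1) * (1 + (g * h).1)
          - (1 + x.1) * (1 + g.1 + h.1 + (g * h).1) := by noncomm_ring
      _ = 0 := by rw [eg, eh, egh, hsum, mul_zero]; simp
  have htr := congrArg trace h2
  rw [mul_two, trace_add, trace_add, trace_eq_neg_one_of_sq_eq_one hx hx1] at htr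
  simp at htr

end CommutingInvolutions

section KleinFrames

/-- The three non-trivial characters of `ℤˣ × ℤˣ` as a diagonal matrix of determinant one. -/
def signDiag (a : ℤˣ × ℤˣ) : Matrix (Fin 3) (Fin 3) ℤ :=
  diagonal ![(a.1 : ℤ), a.2, a.1 * a.2]

/-- Representatives for the faithful actions of `ℤˣ × ℤˣ` on `ℤ³`, given by bases of eigenvectors
(the columns) that are primitive in `ℤ³`. Modulo `2` their linear relations are the six subspaces of
`𝔽₂³` that contain no coordinate vector: `0`, the four lines spanned by a vector of weight at least
two, and the plane `x + y + z = 0`. -/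
def kleinFrame : Fin 6 → Matrix (Fin 3) (Fin 3) ℤ :=
  ![!![1, 0, 0; 0, 1, 0; 0, 0, 1], !![1, 1, 0; 0, 2, 0; 0, 0, 1], !![1, 0, 1; 0, 1, 0; 0, 0, 2],
    !![1, 0, 0; 0, 1, 1; 0, 0, 2], !![1, 0, 1; 0, 1, 1; 0, 0, 2], !![1, 1, 1; 0, 2, 0; 0, 0, 2]]

/-- The integral inverses of the matrices `kleinFrame`, up to the factor `2`. -/
def kleinCoframe : Fin 6 → Matrix (Fin 3) (Fin 3) ℤ :=
  ![!![2, 0, 0; 0, 2, 0; 0, 0, 2], !![2, -1, 0; 0, 1, 0; 0, 0, 2],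
    !![2, 0, -1; 0, 2, 0; 0, 0, 1], !![2, 0, 0; 0, 2, -1; 0, 0, 1],
    !![2, 0, -1; 0, 2, -1; 0, 0, 1], !![2, -1, -1; 0, 1, 0; 0, 0, 1]]

theorem kleinFrame_mul_kleinCoframe (k : Fin 6) : kleinFrame k * kleinCoframe k = 2 := by
  decide +revert

/-- The embedding of `ℤˣ × ℤˣ` in `SL₃(ℤ)` that acts on the columns of `kleinFrame k` by
`signDiag`; it exists over `ℤ` because the division by `2` is exact. -/
def kleinRep (k : Fin 6) : ℤˣ × ℤˣ →* SL(3, ℤ) where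
  toFun a := ⟨(kleinFrame k * signDiag a * kleinCoframe k).map (· / 2), by
    rw [det_fin_three]
    revert k a
    decide +kernel⟩
  map_one' := Subtype.ext <| by
    revert k
    decide +kernel
  map_mul' a b := Subtype.ext <| by
    change (_ : Matrix _ _ ℤ) = _ * _
    revert k a b
    decide +kernel

theorem kleinRep_mul_kleinFrame (k : Fin 6) (a : ℤˣ × ℤˣ) :
    (kleinRep k a).1 * kleinFrame k = kleinFrame k * signDiag a := by
  decide +kernel +revert

theorem kleinRep_injective (k : Fin 6) : Injective (kleinRep k) := by
  refine (injective_iff_map_eq_one _).2 ?_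
  revert k
  decide +kernel

/-- Reduction modulo `2` of integer matrices. -/
abbrev modTwo {m : Type*} [DecidableEq m] [Fintype m] : Matrix m m ℤ →+* Matrix m m (ZMod 2) :=
  (Int.castRingHom (ZMod 2)).mapMatrix

theorem exists_ker_eq_ker_kleinFrame : ∀ P : Matrix (Fin 3) (Fin 3) (ZMod 2), (∀ j, P.col j ≠ 0) →
    ∃ k, ∀ x, P *ᵥ x = 0 ↔ modTwo (kleinFrame k) *ᵥ x = 0 := by
  decide +kernel

/-- The common fixed vectors of `g` and `h`; their number is a conjugacy invariant of the pair. -/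
def fixedVectors {m R : Type*} [DecidableEq m] [Fintype m] [CommRing R] [DecidableEq R] [Fintype R]
    (g h : SpecialLinearGroup m R) : Finset (m → R) :=
  {x | g.1 *ᵥ x = x ∧ h.1 *ᵥ x = x}

theorem card_fixedVectors_conj {m R : Type*} [DecidableEq m] [Fintype m] [CommRing R]
    [DecidableEq R] [Fintype R] (c g h : SpecialLinearGroup m R) :
    (fixedVectors (c * g * c⁻¹) (c * h * c⁻¹)).card = (fixedVectors g h).card := by
  have hfix (g : SpecialLinearGroup m R) (x : m → R) :
      (c * g * c⁻¹).1 *ᵥ (c.1 *ᵥ x) = c.1 *ᵥ x ↔ g.1 *ᵥ x = x := by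
    rw [mulVec_mulVec, ← Matrix.SpecialLinearGroup.coe_mul, inv_mul_cancel_right,
      Matrix.SpecialLinearGroup.coe_mul, ← mulVec_mulVec]
    exact (SpecialLinearGroup.toLin' c).injective.eq_iff
  refine (Finset.card_equiv (SpecialLinearGroup.toLin' c).toEquiv fun x => ?_).symm
  simp only [fixedVectors, Finset.mem_filter, Finset.mem_univ, true_and]
  exact and_congr (hfix g x).symm (hfix h x).symm

theorem eq_of_card_fixedVectors_kleinRep_eq : ∀ k l, (∀ a b,
    (fixedVectors (SpecialLinearGroup.map (Int.castRingHom (ZMod 2)) (kleinRep k a))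
      (SpecialLinearGroup.map (Int.castRingHom (ZMod 2)) (kleinRep k b))).card =
    (fixedVectors (SpecialLinearGroup.map (Int.castRingHom (ZMod 2)) (kleinRep l a))
      (SpecialLinearGroup.map (Int.castRingHom (ZMod 2)) (kleinRep l b))).card) → k = l := by
  decide +kernel

theorem eq_of_conj_kleinRep {k l : Fin 6} {g : SL(3, ℤ)}
    (hg : ∀ a, g * kleinRep k a * g⁻¹ = kleinRep l a) : k = l := by
  refine eq_of_card_fixedVectors_kleinRep_eq k l fun a b => ?_
  rw [← hg, ← hg]
  simp only [map_mul, map_inv, card_fixedVectors_conj]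

end KleinFrames

section KleinEmbeddings

/-- The columns of `P` span the eigenlines of `φ`, and generate a lattice containing `2ℤ³`. -/
structure IsFrame (φ : ℤˣ × ℤˣ →* SL(3, ℤ)) (P : Matrix (Fin 3) (Fin 3) ℤ) : Prop where
  mul_eq (a : ℤˣ × ℤˣ) : (φ a).1 * P = P * signDiag a
  exists_mul_eq_two : ∃ W, P * W = 2

theorem isFrame_kleinRep (k : Fin 6) : IsFrame (kleinRep k) (kleinFrame k) where
  mul_eq := kleinRep_mul_kleinFrame k
  exists_mul_eq_two := ⟨_, kleinFrame_mul_kleinCoframe k⟩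

theorem isRegular_of_mul_eq_two {m : Type*} [DecidableEq m] [Fintype m] {P W : Matrix m m ℤ}
    (h : P * W = 2) : IsRegular P := by
  refine isRegular_of_isLeftRegular_det (IsRegular.of_ne_zero fun h0 => ?_).left
  have hdet := congrArg det h
  rw [det_mul, h0, zero_mul, ← diagonal_ofNat', det_diagonal] at hdet
  exact Finset.prod_ne_zero_iff.2 (fun _ _ => two_ne_zero) hdet.symm

theorem mul_eq_two_comm {m : Type*} [DecidableEq m] [Fintype m] {P W : Matrix m m ℤ}
    (h : P * W = 2) : W * P = 2 := by
  refine (isRegular_of_mul_eq_two h).left ?_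
  change P * (W * P) = P * 2
  rw [← mul_assoc, h, two_mul, mul_two]

theorem exists_mul_eq_of_ker_modTwo_le {m : Type*} [DecidableEq m] [Fintype m]
    {P Q W : Matrix m m ℤ} (hPW : P * W = 2)
    (hker : ∀ x, modTwo P *ᵥ x = 0 → modTwo Q *ᵥ x = 0) : ∃ g : Matrix m m ℤ, g * P = Q := by
  have hPW0 : modTwo P * modTwo W = 0 := by
    rw [← map_mul, hPW, map_ofNat, ← diagonal_ofNat,
      show (OfNat.ofNat 2 : ZMod 2) = 0 from rfl, diagonal_zero]
  have hQW : modTwo (Q * W) = 0 := by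
    rw [map_mul]
    exact ext_col fun j => hker _ (congrArg (col · j) hPW0)
  have hdvd (i j) : (2 : ℤ) ∣ (Q * W) i j :=
    (ZMod.intCast_zmod_eq_zero_iff_dvd _ 2).1 (congrFun₂ hQW i j)
  choose g hg using hdvd
  refine ⟨of g, smul_right_injective _ (two_ne_zero' ℤ) ?_⟩
  have h2 : (2 : ℤ) • of g = Q * W := ext fun i j => by simp [hg]
  change (2 : ℤ) • (of g * P) = (2 : ℤ) • Q
  rw [← Matrix.smul_mul, h2, mul_assoc, mul_eq_two_comm hPW, mul_two, two_smul]

theorem exists_conj_of_isFrame {φ ψ : ℤˣ × ℤˣ →* SL(3, ℤ)} {P Q : Matrix (Fin 3) (Fin 3) ℤ}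
    (hP : IsFrame φ P) (hQ : IsFrame ψ Q)
    (hker : ∀ x, modTwo P *ᵥ x = 0 ↔ modTwo Q *ᵥ x = 0) : ∃ g, ∀ a, g * φ a * g⁻¹ = ψ a := by
  obtain ⟨W, hPW⟩ := hP.exists_mul_eq_two
  obtain ⟨V, hQV⟩ := hQ.exists_mul_eq_two
  obtain ⟨g, hg⟩ := exists_mul_eq_of_ker_modTwo_le hPW fun x => (hker x).1
  obtain ⟨g', hg'⟩ := exists_mul_eq_of_ker_modTwo_le hQV fun x => (hker x).2
  have hgg' : g * g' = 1 := (isRegular_of_mul_eq_two hQV).right <| by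
    change g * g' * Q = 1 * Q
    rw [mul_assoc, hg', hg, one_mul]
  refine exists_conj_of_intertwine (by decide) (isUnit_det_of_right_inverse hgg') fun a =>
    (isRegular_of_mul_eq_two hPW).right ?_
  change g * (φ a).1 * P = (ψ a).1 * g * P
  rw [mul_assoc, hP.mul_eq, ← mul_assoc, hg, mul_assoc, hg, hQ.mul_eq]

/-- The involution of the Klein four-group acting by `+1` on the `j`-th coordinate axis. -/
def kleinElt : Fin 3 → ℤˣ × ℤˣ :=
  ![(1, -1), (-1, 1), (-1, -1)]

theorem kleinElt_injective : Injective kleinElt := by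
  decide

theorem eq_one_or_eq_kleinElt (a : ℤˣ × ℤˣ) : a = 1 ∨ ∃ j, a = kleinElt j := by
  decide +revert

theorem signDiag_one : signDiag 1 = 1 := by
  decide

theorem signDiag_kleinElt (i : Fin 3) :
    signDiag (kleinElt i) = diagonal fun j => if i = j then 1 else -1 := by
  decide +revert

theorem map_kleinElt_sq (φ : ℤˣ × ℤˣ →* SL(3, ℤ)) (i : Fin 3) : φ (kleinElt i) ^ 2 = 1 := by
  rw [← map_pow, show kleinElt i ^ 2 = 1 by decide +revert, map_one]

theorem map_kleinElt_ne_one {φ : ℤˣ × ℤˣ →* SL(3, ℤ)} (hφ : Injective φ) (i : Fin 3) :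
    φ (kleinElt i) ≠ 1 :=
  (map_ne_one_iff φ hφ).2 (by decide +revert)

theorem one_add_mul_one_add_map_kleinElt {φ : ℤˣ × ℤˣ →* SL(3, ℤ)} (hφ : Injective φ)
    {i j : Fin 3} (hij : i ≠ j) :
    (1 + (φ (kleinElt i)).1) * (1 + (φ (kleinElt j)).1) = 0 :=
  one_add_mul_one_add_eq_zero (map_kleinElt_sq φ i) (map_kleinElt_sq φ j)
    (map_kleinElt_ne_one hφ i) (map_kleinElt_ne_one hφ j) ((hφ.comp kleinElt_injective).ne hij)
    ((Commute.all _ _).map φ)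

theorem mulVec_eq_of_one_add_eq_vecMulVec {φ : ℤˣ × ℤˣ →* SL(3, ℤ)} (hφ : Injective φ)
    {v w : Fin 3 → Fin 3 → ℤ} (hvw : ∀ j, 1 + (φ (kleinElt j)).1 = vecMulVec (v j) (w j))
    (hwv : ∀ j, w j ⬝ᵥ v j = 2) (i j : Fin 3) :
    (φ (kleinElt i)).1 *ᵥ v j = (if i = j then 1 else -1 : ℤ) • v j := by
  have hplus : (1 + (φ (kleinElt j)).1) *ᵥ v j = (2 : ℤ) • v j := by
    rw [hvw, vecMulVec_mulVec, hwv]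
    ext r
    simp [mul_comm]
  split_ifs with hij
  · rw [hij, one_smul, ← add_right_inj (v j), ← two_smul ℤ, ← hplus, add_mulVec, one_mulVec]
  · have hminus : (2 : ℤ) • ((1 + (φ (kleinElt i)).1) *ᵥ v j) = 0 := by
      rw [← mulVec_smul, ← hplus, mulVec_mulVec, one_add_mul_one_add_map_kleinElt hφ hij,
        zero_mulVec]
    rw [smul_eq_zero_iff_right two_ne_zero, add_mulVec, one_mulVec] at hminus
    rw [neg_one_smul, eq_neg_of_add_eq_zero_right hminus]

theorem exists_isFrame {φ : ℤˣ × ℤˣ →* SL(3, ℤ)} (hφ : Injective φ) :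
    ∃ P, IsFrame φ P ∧ ∀ j, (modTwo P).col j ≠ 0 := by
  choose u v w hvw huv hwv using fun j =>
    exists_one_add_eq_vecMulVec (map_kleinElt_sq φ j) (map_kleinElt_ne_one hφ j)
  refine ⟨(of v)ᵀ, ⟨fun a => ?_, of w, ?_⟩, fun j hj => ?_⟩
  · rcases eq_one_or_eq_kleinElt a with rfl | ⟨i, rfl⟩
    · simp [signDiag_one]
    · ext r j
      rw [signDiag_kleinElt, mul_diagonal, mul_comm]
      exact congrFun (mulVec_eq_of_one_add_eq_vecMulVec hφ hvw hwv i j) r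
  · have hsum : (of v)ᵀ * of w = ∑ j, vecMulVec (v j) (w j) := by
      ext r s
      simp [mul_apply, Matrix.sum_apply, vecMulVec_apply]
    rw [hsum, Fin.sum_univ_three, ← hvw, ← hvw, ← hvw]
    rw [show kleinElt 2 = kleinElt 0 * kleinElt 1 by decide, map_mul,
      Matrix.SpecialLinearGroup.coe_mul]
    calc 1 + (φ (kleinElt 0)).1 + (1 + (φ (kleinElt 1)).1)
          + (1 + (φ (kleinElt 0)).1 * (φ (kleinElt 1)).1)
        = 1 + 1 + (1 + (φ (kleinElt 0)).1) * (1 + (φ (kleinElt 1)).1) := by noncomm_ring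
      _ = 2 := by rw [one_add_mul_one_add_map_kleinElt hφ (by decide), add_zero, one_add_one_eq_two]
  · have hv : ∀ r, ((v j r : ℤ) : ZMod 2) = 0 := congrFun hj
    have huv2 : ((u j ⬝ᵥ v j : ℤ) : ZMod 2) = 0 := by simp [dotProduct, hv]
    simp [huv] at huv2

theorem card_embClass_kleinFour : Nat.card (EmbClass (ℤˣ × ℤˣ) SL(3, ℤ)) = 6 := by
  rw [card_embClass_eq fun k => ⟨kleinRep k, kleinRep_injective k⟩]
  · simp
  · rintro k l ⟨g, hg⟩
    exact eq_of_conj_kleinRep hg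
  · rintro ⟨ψ, hψ⟩
    obtain ⟨P, hP, hcol⟩ := exists_isFrame hψ
    obtain ⟨k, hk⟩ := exists_ker_eq_ker_kleinFrame (modTwo P) hcol
    exact ⟨k, exists_conj_of_isFrame (isFrame_kleinRep k) hP fun x => (hk x).symm⟩

end KleinEmbeddings

section Classification

variable {G : Type*} [Group G] {n : ℕ}

theorem mem_tuplesOfType_of_subsingleton {A : Type*} [Group A] [Subsingleton A] {t : Fin n → G}
    (ht : ∀ i, t i = 1) : t ∈ tuplesOfType A G n :=
  mem_tuplesOfType_iff.2
    ⟨1, injective_of_subsingleton _, 1, genTuples_of_subsingleton A n ▸ Set.mem_univ _,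
      by simp [ht]⟩

theorem mem_tuplesOfType_of_isCyclic {A : Type*} [Group A] [IsCyclic A] {t : Fin n → G} {i : Fin n}
    (hi : orderOf (t i) = Nat.card A) (ht : ∀ j, t j ∈ zpowers (t i)) :
    t ∈ tuplesOfType A G n := by
  have hclosure : Subgroup.closure (Set.range t) = zpowers (t i) :=
    le_antisymm ((closure_le _).2 (Set.range_subset_iff.2 ht))
      (zpowers_le.2 (subset_closure (Set.mem_range_self i)))
  rw [tuplesOfType, Set.mem_ofPred_eq, hclosure]
  exact ⟨mulEquivOfCyclicCardEq (by rw [Nat.card_zpowers, hi])⟩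

theorem commute_of_mem_closure {s : Set G} (hs : ∀ x ∈ s, ∀ y ∈ s, Commute x y) {x y : G}
    (hx : x ∈ Subgroup.closure s) (hy : y ∈ Subgroup.closure s) : Commute x y :=
  have := isMulCommutative_closure hs
  congrArg Subtype.val (mul_comm' (⟨x, hx⟩ : Subgroup.closure s) ⟨y, hy⟩)

theorem sq_eq_one_of_mem_closure {s : Set G} (hs : ∀ x ∈ s, ∀ y ∈ s, Commute x y)
    (hsq : ∀ x ∈ s, x ^ 2 = 1) {x : G} (hx : x ∈ Subgroup.closure s) : x ^ 2 = 1 := by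
  induction hx using closure_induction with
  | mem x hx => exact hsq x hx
  | one => exact one_pow 2
  | mul x y hx hy ihx ihy => rw [(commute_of_mem_closure hs hx hy).mul_pow, ihx, ihy, one_mul]
  | inv x _ ih => rw [inv_pow, ih, inv_one]

theorem isKleinFour_of_forall_mem {K : Subgroup G} {g h : G} (hsq : ∀ x ∈ K, x ^ 2 = 1)
    (hgK : g ∈ K) (hhK : h ∈ K) (hg : g ≠ 1) (hh : h ≠ 1) (hgh : g ≠ h)
    (hK : ∀ x ∈ K, x = 1 ∨ x = g ∨ x = h ∨ x = g * h) : IsKleinFour K where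
  card_four := by
    have hprod : g * h ≠ 1 := mul_ne_one_of_sq_eq_one (hsq h hhK) hgh
    have hcoe : (K : Set G) = {1, g, h, g * h} := by
      refine Set.Subset.antisymm hK ?_
      rintro _ (rfl | rfl | rfl | rfl)
      exacts [K.one_mem, hgK, hhK, K.mul_mem hgK hhK]
    change (K : Set G).ncard = 4
    rw [hcoe, Set.ncard_eq_four]
    exact ⟨1, g, h, g * h, hg.symm, hh.symm, hprod.symm, hgh, by simpa using hh, by simpa using hg,
      rfl⟩
  exponent_two := by
    have : Nontrivial K := (nontrivial_iff_exists_ne_one K).2 ⟨g, hgK, hg⟩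
    exact (Monoid.exponent_eq_prime_iff Nat.prime_two).2 fun x hx =>
      orderOf_eq_prime (Subtype.ext (hsq x x.2)) hx

theorem isKleinFour_units : IsKleinFour (ℤˣ × ℤˣ) where
  card_four := by simp
  exponent_two :=
    have : Nontrivial (ℤˣ × ℤˣ) := ⟨1, -1, by decide⟩
    (Monoid.exponent_eq_prime_iff Nat.prime_two).2 fun _ hx =>
      orderOf_eq_prime (by decide +revert) hx

theorem mem_tuplesOfType_kleinFour {t : Fin n → SL(3, ℤ)} (hcomm : ∀ i j, Commute (t i) (t j))
    (hsq : ∀ i, t i ^ 2 = 1) {i j : Fin n} (hi : t i ≠ 1) (hj : t j ≠ 1) (hij : t i ≠ t j) :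
    t ∈ tuplesOfType (ℤˣ × ℤˣ) SL(3, ℤ) n := by
  have hcomm' : ∀ x ∈ Set.range t, ∀ y ∈ Set.range t, Commute x y := by
    rintro _ ⟨k, rfl⟩ _ ⟨l, rfl⟩
    exact hcomm k l
  have hsq' : ∀ x ∈ Subgroup.closure (Set.range t), x ^ 2 = 1 := fun x =>
    sq_eq_one_of_mem_closure hcomm' (Set.forall_mem_range.2 hsq)
  have hmem : ∀ k, t k ∈ Subgroup.closure (Set.range t) := fun k =>
    subset_closure (Set.mem_range_self k)
  have := isKleinFour_units
  have : IsKleinFour (Subgroup.closure (Set.range t)) :=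
    isKleinFour_of_forall_mem hsq' (hmem i) (hmem j) hi hj hij fun x hx =>
      eq_one_or_eq_of_commute (hsq i) (hsq j) hi hj hij (hcomm i j) (hsq' x hx)
        (commute_of_mem_closure hcomm' hx (hmem i)) (commute_of_mem_closure hcomm' hx (hmem j))
  exact IsKleinFour.nonempty_mulEquiv

theorem mem_tuplesOfType_of_mem_pTuples {t : Fin n → SL(3, ℤ)} (ht : t ∈ pTuples SL(3, ℤ) 2 n) :
    t ∈ tuplesOfType Unit SL(3, ℤ) n ∨ t ∈ tuplesOfType (Multiplicative (ZMod 2)) SL(3, ℤ) n ∨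
      t ∈ tuplesOfType (Multiplicative (ZMod 4)) SL(3, ℤ) n ∨
        t ∈ tuplesOfType (ℤˣ × ℤˣ) SL(3, ℤ) n := by
  obtain ⟨hcomm, hord⟩ := ht
  have h4 : ∀ i, t i ^ 4 = 1 := fun i => by
    obtain ⟨k, hk⟩ := hord i
    exact pow_four_eq_one_of_pow_two_pow (hk ▸ pow_orderOf_eq_one (t i))
  by_cases! hsq : ∃ i, t i ^ 2 ≠ 1
  · obtain ⟨i, hi⟩ := hsq
    refine .inr (.inr (.inl (mem_tuplesOfType_of_isCyclic (i := i) ?_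
      fun j => mem_zpowers_of_commute (h4 i) hi (hcomm i j))))
    rw [card_multiplicative_zmod]
    exact orderOf_eq_prime_pow (p := 2) (n := 1) hi (h4 i)
  by_cases! h1 : ∀ i, t i = 1
  · exact .inl (mem_tuplesOfType_of_subsingleton h1)
  obtain ⟨i, hi⟩ := h1
  by_cases! hmem : ∀ j, t j = 1 ∨ t i = t j
  · refine .inr (.inl (mem_tuplesOfType_of_isCyclic (i := i) ?_ fun j => ?_))
    · rw [card_multiplicative_zmod]
      exact orderOf_eq_prime (hsq i) hi
    · rcases hmem j with hj | hj
      exacts [hj ▸ one_mem _, hj ▸ mem_zpowers _]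
  · obtain ⟨j, hj, hij⟩ := hmem
    exact .inr (.inr (.inr (mem_tuplesOfType_kleinFour hcomm hsq hi hj hij)))

theorem pTuples_two_eq_union :
    pTuples SL(3, ℤ) 2 n = tuplesOfType Unit SL(3, ℤ) n ∪
      (tuplesOfType (Multiplicative (ZMod 2)) SL(3, ℤ) n ∪
        (tuplesOfType (Multiplicative (ZMod 4)) SL(3, ℤ) n ∪
          tuplesOfType (ℤˣ × ℤˣ) SL(3, ℤ) n)) := by
  refine Set.Subset.antisymm (fun _ => mem_tuplesOfType_of_mem_pTuples) ?_
  refine Set.union_subset ?_ (Set.union_subset ?_ (Set.union_subset ?_ ?_)) <;>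
    refine tuplesOfType_subset_pTuples (IsPGroup.of_card (n := ?_) ?_)
  exacts [0, by simp, 1, card_multiplicative_zmod 2, 2, card_multiplicative_zmod 4, 2, by simp]

end Classification

section Counting

variable {G : Type*} [Group G] (n : ℕ)

theorem card_quot_tuplesOfType_unit : Nat.card (Quot (tupleConj (tuplesOfType Unit G n))) = 1 := by
  have := card_quot_mul_card_mulAut (A := Unit) (G := G) (n := n)
  rw [card_embClass_of_subsingleton, genTuples_of_subsingleton] at this
  simpa using this

theorem card_quot_tuplesOfType_two :
    Nat.card (Quot (tupleConj (tuplesOfType (Multiplicative (ZMod 2)) SL(3, ℤ) n))) =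
      2 * (2 ^ n - 1) := by
  have := card_quot_mul_card_mulAut (A := Multiplicative (ZMod 2)) (G := SL(3, ℤ)) (n := n)
  rw [card_embClass_two,
    card_genTuples_of_card_eq_pow_succ (p := 2) (k := 0) (card_multiplicative_zmod 2),
    IsCyclic.card_mulAut, card_multiplicative_zmod, Nat.totient_two] at this
  simpa [mul_comm] using this

theorem card_quot_tuplesOfType_four :
    Nat.card (Quot (tupleConj (tuplesOfType (Multiplicative (ZMod 4)) SL(3, ℤ) n))) =
      2 ^ (2 * n) - 2 ^ n := by
  have := card_quot_mul_card_mulAut (A := Multiplicative (ZMod 4)) (G := SL(3, ℤ)) (n := n)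
  rw [card_embClass_four,
    card_genTuples_of_card_eq_pow_succ (p := 2) (k := 1) (card_multiplicative_zmod 4),
    IsCyclic.card_mulAut, card_multiplicative_zmod, show Nat.totient 4 = 2 by decide] at this
  simpa using this

theorem card_quot_tuplesOfType_kleinFour :
    Nat.card (Quot (tupleConj (tuplesOfType (ℤˣ × ℤˣ) SL(3, ℤ) n))) =
      (2 ^ n - 1) * (2 ^ n - 2) := by
  have := card_quot_mul_card_mulAut (A := ℤˣ × ℤˣ) (G := SL(3, ℤ)) (n := n)
  rw [card_embClass_kleinFour, card_genTuples_kleinFour, card_mulAut_kleinFour] at this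
  exact Nat.eq_of_mul_eq_mul_right (by decide) this

end Counting

theorem isEmpty_zmod_four_mulEquiv_kleinFour :
    IsEmpty (Multiplicative (ZMod 4) ≃* ℤˣ × ℤˣ) := by
  have := isKleinFour_units
  exact ⟨fun e => IsKleinFour.not_isCyclic (isCyclic_of_surjective e e.surjective)⟩

theorem card_quot_pTuples_two (n : ℕ) : Nat.card (Quot (tupleConj (pTuples SL(3, ℤ) 2 n))) =
    1 + (2 * (2 ^ n - 1) + (2 ^ (2 * n) - 2 ^ n + (2 ^ n - 1) * (2 ^ n - 2))) := by
  have h4V : ConjDisjoint (tuplesOfType (Multiplicative (ZMod 4)) SL(3, ℤ) n)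
      (tuplesOfType (ℤˣ × ℤˣ) SL(3, ℤ) n) :=
    conjDisjoint_of_isEmpty_mulEquiv isEmpty_zmod_four_mulEquiv_kleinFour
  have h2 : ConjDisjoint (tuplesOfType (Multiplicative (ZMod 2)) SL(3, ℤ) n)
      (tuplesOfType (Multiplicative (ZMod 4)) SL(3, ℤ) n ∪ tuplesOfType (ℤˣ × ℤˣ) SL(3, ℤ) n) :=
    .union_right (conjDisjoint_of_card_ne (by simp)) (conjDisjoint_of_card_ne (by simp))
  have h1 : ConjDisjoint (tuplesOfType Unit SL(3, ℤ) n)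
      (tuplesOfType (Multiplicative (ZMod 2)) SL(3, ℤ) n ∪
        (tuplesOfType (Multiplicative (ZMod 4)) SL(3, ℤ) n ∪
          tuplesOfType (ℤˣ × ℤˣ) SL(3, ℤ) n)) :=
    .union_right (conjDisjoint_of_card_ne (by simp)) <|
      .union_right (conjDisjoint_of_card_ne (by simp)) (conjDisjoint_of_card_ne (by simp))
  have := finite_quot_tuplesOfType (A := Unit) (G := SL(3, ℤ)) (n := n)
    (by simp [card_embClass_of_subsingleton])
  have := finite_quot_tuplesOfType (A := Multiplicative (ZMod 2)) (G := SL(3, ℤ)) (n := n)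
    (by simp [card_embClass_two])
  have := finite_quot_tuplesOfType (A := Multiplicative (ZMod 4)) (G := SL(3, ℤ)) (n := n)
    (by simp [card_embClass_four])
  have := finite_quot_tuplesOfType (A := ℤˣ × ℤˣ) (G := SL(3, ℤ)) (n := n)
    (by simp [card_embClass_kleinFour])
  have := finite_quot_union h4V
  have := finite_quot_union h2
  rw [pTuples_two_eq_union, card_quot_union h1, card_quot_union h2, card_quot_union h4V,
    card_quot_tuplesOfType_unit, card_quot_tuplesOfType_two, card_quot_tuplesOfType_four,
    card_quot_tuplesOfType_kleinFour]

end CommutingTuples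

/-- The number of orbits of simultaneous conjugation of `SL₃(ℤ)` on the set of
`n`-tuples of pairwise commuting elements of 2-power order equals `2^{2n+1} − 2^{n+1} + 1`. -/
theorem sl3_orbit_count_two (n : ℕ) (hn : 1 ≤ n) :
    Nat.card (Quot (tupleConj (pTuples (Matrix.SpecialLinearGroup (Fin 3) ℤ) 2 n))) =
      2 ^ (2 * n + 1) - 2 ^ (n + 1) + 1 := by
  rw [CommutingTuples.card_quot_pTuples_two, pow_succ, pow_succ, mul_comm 2 n, pow_mul]
  obtain ⟨m, hm⟩ := Nat.exists_eq_add_of_le' (Nat.one_le_two_pow (n := n))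
  rw [hm]
  cases m with
  | zero => rfl
  | succ m =>
    have hsq : (m + 1 + 1) ^ 2 = m ^ 2 + 4 * m + 4 := by ring
    have hmul : (m + 1) * m = m ^ 2 + m := by ring
    simp only [Nat.add_sub_cancel, Nat.reduceSubDiff]
    omega
end
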